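/- Let H be either H1 or H2. For all integers k ≥ 1 and r with 0 ≤ r ≤ k such that k−r is even and r is odd, GR_k((k−r)K3, rH) = 4·5^((k−r)/2)·17^((r−1)/2) + 1. -/

import Mathlib

open SimpleGraph

/-- A rainbow triangle in an edge-coloring of a complete graph: three distinct
vertices whose three pairwise edges receive three pairwise distinct colors. -/
def HasRainbowTriangle {n k : ℕ} (c : Fin n → Fin n → Fin k) : Prop :=
  ∃ u v w : Fin n, u ≠ v ∧ u ≠ w ∧ v ≠ w ∧
    c u v ≠ c u w ∧ c u v ≠ c v w ∧ c u w ≠ c v w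

/-- A Gallai `k`-coloring of `K_n`: a symmetric edge-coloring with no rainbow triangle. -/
def IsGallaiColoring {n k : ℕ} (c : Fin n → Fin n → Fin k) : Prop :=
  (∀ u v, c u v = c v u) ∧ ¬ HasRainbowTriangle c

/-- A monochromatic copy of the graph `F` in color `i`: an injection of the vertices
of `F` into the vertices of `K_n` mapping every edge of `F` to an edge colored `i`. -/
def HasMonoCopy {V : Type} (F : SimpleGraph V) {n k : ℕ}
    (c : Fin n → Fin n → Fin k) (i : Fin k) : Prop :=
  ∃ f : V → Fin n, Function.Injective f ∧ ∀ a b, F.Adj a b → c (f a) (f b) = i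

/-- The Gallai-Ramsey number `GR(F₁, …, F_k)`: the least `n` such that every Gallai
`k`-coloring of `K_n` contains, for some color `i`, a monochromatic copy of `Fᵢ`
in color `i`. -/
noncomputable def GR (k : ℕ) (F : Fin k → Σ V : Type, SimpleGraph V) : ℕ :=
  sInf {n : ℕ | ∀ c : Fin n → Fin n → Fin k, IsGallaiColoring c →
    ∃ i : Fin k, HasMonoCopy (F i).2 c i}

/-- The triangle `K₃`. -/
def GK3 : SimpleGraph (Fin 3) := ⊤

/-- The path `P₃` on three vertices (edges 0–1 and 1–2). -/
def GP3 : SimpleGraph (Fin 3) := SimpleGraph.fromRel (fun a _ => a = 1)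

/-- `H₁`: a `K₄` on `{0,1,2,3}` together with the extra vertex `4` adjacent to
exactly the vertex `3`. -/
def GH1 : SimpleGraph (Fin 5) :=
  SimpleGraph.fromRel (fun a b => (a ≠ 4 ∧ b ≠ 4) ∨ (a = 3 ∧ b = 4))

/-- `H₂`: `K₅` minus the two edges 0–1 and 1–2 of a path on three vertices. -/
def GH2 : SimpleGraph (Fin 5) :=
  (⊤ : SimpleGraph (Fin 5)) \
    SimpleGraph.fromRel (fun a b => (a = 0 ∧ b = 1) ∨ (a = 1 ∧ b = 2))

/-- `H₃`: `K₅` minus the edge 0–1. -/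
def GH3 : SimpleGraph (Fin 5) :=
  (⊤ : SimpleGraph (Fin 5)) \ SimpleGraph.fromRel (fun a b => a = 0 ∧ b = 1)
/-- The family of graphs for `GR_k((k-r)K₃, rH)`: the graph `H` in each of the first
`r` colors and the triangle `K₃` in each of the remaining `k - r` colors. -/
def mixKH (k r : ℕ) (H : SimpleGraph (Fin 5)) : Fin k → Σ V : Type, SimpleGraph V :=
  fun i => if (i : ℕ) < r then ⟨Fin 5, H⟩ else ⟨Fin 3, GK3⟩

/-!
Forbidding a colour altogether, forbidding its triangles, and forbidding its copies of `H` are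
three levels of restriction, and the extremal order depends only on the number of colours at each
level. Since `H₁ ⊆ H₂`, the upper bound is proved for `H₂` and the lower bound for `H₁`, which gives
both for every graph between them.

Upper bound, by induction on the levels: a Gallai colouring has a partition whose blocks are joined
in only two colours `i` and `j`, each pair of blocks in a single one of them. If a block is joined
to everything else in one colour, the colouring is a join of two parts and both have a smaller level
in this colour. Otherwise a block loses a clique size in both colours, and the number of blocks is
at most `R(3, 3) - 1 = 5`, `R(3, 4) - 1 = 8` or `R(4, 4) - 1 = 17`, as long as the level `2` colours
contain no `K₄`. If there is a monochromatic `K₄`, being free of `H₂` forces nearly all edges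
leaving it to have the other colour, which leaves little room.

Lower bound: pairs of colours of the same level contribute a factor `5` or `17` by substitution into
the Paley colourings, and a single remaining colour a factor `2` or `4`.
-/

namespace GallaiRamsey

section Join

variable {V : Type*} {G : SimpleGraph V} {A X Y : Set V}

theorem cliqueFreeOn_of_isCompleteBetween {m n : ℕ} (hA : G.CliqueFreeOn A (m + n))
    (hXA : X ⊆ A) (hYA : Y ⊆ A) (hXY : G.IsCompleteBetween X Y) (hY : ¬ G.CliqueFreeOn Y m) :
    G.CliqueFreeOn X n := by
  classical
  intro s hsX hs
  obtain ⟨t, htY, ht⟩ : ∃ t : Finset V, ↑t ⊆ Y ∧ G.IsNClique m t := by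
    simpa only [CliqueFreeOn, not_forall, not_not, exists_prop] using hY
  have hdisj : Disjoint t s :=
    Finset.disjoint_coe.1 (hXY.disjoint.symm.mono htY hsX)
  refine hA (t := t ∪ s) (by simpa using ⟨htY.trans hYA, hsX.trans hXA⟩) ⟨?_, ?_⟩
  · rw [Finset.coe_union]
    exact Set.pairwise_union.2 ⟨ht.isClique, hs.isClique, fun y hy x hx _ ↦
      ⟨(hXY (hsX hx) (htY hy)).symm, hXY (hsX hx) (htY hy)⟩⟩
  · rw [Finset.card_union_of_disjoint hdisj, ht.card_eq, hs.card_eq]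

theorem cliqueFreeOn_of_isCompleteBetween_nonempty {n : ℕ} (hA : G.CliqueFreeOn A (n + 1))
    (hXA : X ⊆ A) (hYA : Y ⊆ A) (hXY : G.IsCompleteBetween X Y) (hY : Y.Nonempty) :
    G.CliqueFreeOn X n := by
  obtain ⟨y, hy⟩ := hY
  refine cliqueFreeOn_of_isCompleteBetween (m := 1) (by rwa [add_comm]) hXA hYA hXY fun h ↦ ?_
  exact h (t := {y}) (by simpa using hy) (by simp)

end Join

section H2Free

variable {V : Type*} {G : SimpleGraph V} {A X Y : Set V}

/-- `H2FreeOn G A` says that the restriction of `G` to `A` contains no copy of `H₂`. Since `H₂` is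
`K₄` with an extra vertex joined to two vertices of the clique, this means that a vertex of `A`
outside a `4`-clique of `A` has at most one neighbour in that clique. -/
def H2FreeOn (G : SimpleGraph V) (A : Set V) : Prop :=
  ∀ Q : Finset V, ↑Q ⊆ A → G.IsNClique 4 Q → ∀ w ∈ A, w ∉ Q → (↑Q ∩ G.neighborSet w).Subsingleton

theorem H2FreeOn.mono (h : H2FreeOn G A) (hXA : X ⊆ A) : H2FreeOn G X :=
  fun Q hQ hQ4 w hw ↦ h Q (hQ.trans hXA) hQ4 w (hXA hw)

theorem isNClique_insert_of_isCompleteBetween [DecidableEq V] {n : ℕ} {s : Finset V} {y : V}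
    (hXY : G.IsCompleteBetween X Y) (hs : G.IsNClique n s) (hsX : ↑s ⊆ X) (hy : y ∈ Y) :
    G.IsNClique (n + 1) (insert y s) :=
  hs.insert fun _ hx ↦ (hXY (hsX hx) hy).symm

theorem H2FreeOn.not_adj_of_triangle (hA : H2FreeOn G A) (hXA : X ⊆ A) (hYA : Y ⊆ A)
    (hXY : G.IsCompleteBetween X Y) (hY : Y.Nonempty) {T : Finset V} (hTX : ↑T ⊆ X)
    (hT : G.IsNClique 3 T) {z t : V} (hz : z ∈ X) (hzT : z ∉ T) (ht : t ∈ T) : ¬ G.Adj z t := by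
  classical
  obtain ⟨y, hy⟩ := hY
  intro hzt
  refine (hXY (hTX ht) hy).ne (hA (insert y T) ?_
    (isNClique_insert_of_isCompleteBetween hXY hT hTX hy) z (hXA hz) ?_ ⟨?_, hzt⟩
    ⟨?_, hXY hz hy⟩)
  · simpa [Set.insert_subset_iff] using ⟨hYA hy, hTX.trans hXA⟩
  · simpa using ⟨(hXY hz hy).ne, hzT⟩
  · simpa using Or.inr ht
  · simp

theorem H2FreeOn.cliqueFreeOn_three (hA : H2FreeOn G A) (hXA : X ⊆ A) (hYA : Y ⊆ A)
    (hXY : G.IsCompleteBetween X Y) (hY : Y.Nontrivial) : G.CliqueFreeOn X 3 := by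
  classical
  obtain ⟨y, hy, y', hy', hyy'⟩ := hY
  intro T hTX hT
  obtain ⟨a, ha, b, hb, hab⟩ := Finset.one_lt_card.1 (by rw [hT.card_eq]; norm_num : 1 < T.card)
  refine hab (hA (insert y T) ?_ (isNClique_insert_of_isCompleteBetween hXY hT hTX hy)
    y' (hYA hy') ?_ ⟨?_, (hXY (hTX ha) hy').symm⟩ ⟨?_, (hXY (hTX hb) hy').symm⟩)
  · simpa [Set.insert_subset_iff] using ⟨hYA hy, hTX.trans hXA⟩
  · simpa using ⟨hyy'.symm, fun h ↦ (hXY (hTX h) hy').ne rfl⟩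
  · simpa using Or.inr ha
  · simpa using Or.inr hb

theorem H2FreeOn.cliqueFreeOn_two_or {X Y : Finset V} (hA : H2FreeOn G A) (hXA : ↑X ⊆ A)
    (hYA : ↑Y ⊆ A) (hXY : G.IsCompleteBetween X Y) (hX : 2 < X.card) :
    G.CliqueFreeOn X 2 ∨ G.CliqueFreeOn Y 2 := by
  classical
  by_contra! h
  obtain ⟨⟨s, hsX, hs⟩, t, htY, ht⟩ : (∃ s : Finset V, s ⊆ X ∧ G.IsNClique 2 s) ∧
      ∃ t : Finset V, t ⊆ Y ∧ G.IsNClique 2 t := by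
    simpa [CliqueFreeOn] using h
  obtain ⟨z, hzX, hzs⟩ := Finset.exists_mem_notMem_of_card_lt_card (hs.card_eq.trans_lt hX)
  obtain ⟨y, y', hyy', rfl⟩ := Finset.card_eq_two.1 ht.card_eq
  simp only [Finset.insert_subset_iff, Finset.singleton_subset_iff] at htY
  have hQ : G.IsNClique 4 (insert y (insert y' s)) := by
    refine (isNClique_insert_of_isCompleteBetween hXY hs (by simpa using hsX)
      (by simpa using htY.2)).insert fun b hb ↦ ?_
    rcases Finset.mem_insert.1 hb with rfl | hb
    · exact ht.isClique (by simp) (by simp) hyy'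
    · exact (hXY (hsX hb) htY.1).symm
  refine hyy' (hA _ ?_ hQ z (hXA hzX) ?_ ⟨?_, hXY hzX htY.1⟩ ⟨?_, hXY hzX htY.2⟩)
  · intro v hv
    simp only [Finset.coe_insert, Set.mem_insert_iff, Finset.mem_coe] at hv
    rcases hv with rfl | rfl | hv
    exacts [hYA htY.1, hYA htY.2, hXA (hsX hv)]
  · simp [(hXY hzX htY.1).ne, (hXY hzX htY.2).ne, hzs]
  all_goals simp

theorem exists_triangleFree_subset_of_isolated_triangles (X : Finset V)
    (hX : ∀ T ⊆ X, G.IsNClique 3 T → ∀ z ∈ X, z ∉ T → ∀ t ∈ T, ¬ G.Adj z t) :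
    ∃ D ⊆ X, G.CliqueFreeOn D 3 ∧ 2 * X.card ≤ 3 * D.card := by
  classical
  induction X using Finset.strongInduction with
  | H X ih =>
    by_cases hfree : G.CliqueFreeOn X 3
    · exact ⟨X, subset_rfl, hfree, by omega⟩
    obtain ⟨T, hTX, hT⟩ : ∃ T ⊆ X, G.IsNClique 3 T := by simpa [CliqueFreeOn] using hfree
    obtain ⟨z, hz⟩ : T.Nonempty := Finset.card_pos.1 (by rw [hT.card_eq]; norm_num)
    obtain ⟨D, hDX, hD, hcard⟩ := ih (X \ T)
      (Finset.sdiff_ssubset hTX ⟨z, hz⟩) fun S hS hS3 u hu ↦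
        hX S (hS.trans Finset.sdiff_subset) hS3 u (Finset.sdiff_subset hu)
    have hDT : Disjoint D (T.erase z) :=
      (Finset.disjoint_sdiff.symm.mono_left hDX).mono_right (Finset.erase_subset z T)
    have hsub : D ∪ T.erase z ⊆ X :=
      Finset.union_subset (hDX.trans Finset.sdiff_subset) ((Finset.erase_subset z T).trans hTX)
    refine ⟨D ∪ T.erase z, hsub, fun S hS hS3 ↦ ?_, ?_⟩
    · rw [Finset.coe_subset] at hS
      by_cases hST : ∃ t ∈ S, t ∈ T
      · obtain ⟨t, htS, htT⟩ := hST
        have hS_sub : S ⊆ T := fun u hu ↦ by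
          by_contra huT
          exact hX T hTX hT u (hsub (hS hu)) huT t htT
            (hS3.isClique hu htS (ne_of_mem_of_not_mem htT huT).symm)
        have hle := Finset.card_le_card (fun u hu ↦ (Finset.mem_union.1 (hS hu)).resolve_left
          fun huD ↦ (Finset.mem_sdiff.1 (hDX huD)).2 (hS_sub hu) : S ⊆ T.erase z)
        rw [hS3.card_eq, Finset.card_erase_of_mem hz, hT.card_eq] at hle
        omega
      · push Not at hST
        exact hD (fun u hu ↦ (Finset.mem_union.1 (hS hu)).resolve_right
          fun huT ↦ hST u hu (Finset.mem_of_mem_erase huT)) hS3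
    · have := Finset.card_sdiff_add_card_eq_card hTX
      rw [Finset.card_union_of_disjoint hDT, Finset.card_erase_of_mem hz, hT.card_eq]
      rw [hT.card_eq] at this
      omega

theorem H2FreeOn.exists_triangleFree_subset {X : Finset V} (hA : H2FreeOn G A) (hXA : ↑X ⊆ A)
    (hYA : Y ⊆ A) (hXY : G.IsCompleteBetween X Y) (hY : Y.Nonempty) :
    ∃ D ⊆ X, G.CliqueFreeOn D 3 ∧ 2 * X.card ≤ 3 * D.card :=
  exists_triangleFree_subset_of_isolated_triangles X fun _ hTX hT _ hz hzT _ ht ↦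
    hA.not_adj_of_triangle hXA hYA hXY hY (by simpa using hTX) hT hz hzT ht

end H2Free

section CoveredClique

variable {V : Type*} {G : SimpleGraph V} {A Q S : Finset V}

theorem exists_forall_adj_of_card_lt
    (h : ∀ w ∈ S, ∀ q ∈ Q, ∀ q' ∈ Q, q ≠ q' → G.Adj w q ∨ G.Adj w q') (hcard : S.card < Q.card) :
    ∃ q ∈ Q, ∀ w ∈ S, G.Adj w q := by
  by_contra! hno
  choose! f hfS hf using hno
  obtain ⟨q, hq, q', hq', hne, heq⟩ := Finset.exists_ne_map_eq_of_card_lt_of_maps_to hcard hfS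
  rcases h (f q) (hfS q hq) q hq q' hq' hne with hadj | hadj
  · exact hf q hq hadj
  · exact hf q' hq' (heq ▸ hadj)

section Sdiff

variable [DecidableEq V]
  (h : ∀ w ∈ A, w ∉ Q → ∀ q ∈ Q, ∀ q' ∈ Q, q ≠ q' → G.Adj w q ∨ G.Adj w q') (hQA : Q ⊆ A)
include h hQA

theorem cliqueFreeOn_sdiff {n : ℕ} (hA : G.CliqueFreeOn A (n + 1)) (hcard : n < Q.card) :
    G.CliqueFreeOn (A \ Q : Finset V) n := by
  intro S hS hSn
  have hS' : ∀ w ∈ S, w ∈ A ∧ w ∉ Q := fun w hw ↦ Finset.mem_sdiff.1 (hS hw)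
  obtain ⟨q, hq, hadj⟩ := exists_forall_adj_of_card_lt
    (fun w hw ↦ h w (hS' w hw).1 (hS' w hw).2) (hSn.card_eq.trans_lt hcard)
  refine hA ?_ (hSn.insert fun w hw ↦ (hadj w hw).symm)
  exact_mod_cast Finset.insert_subset (hQA hq) fun w hw ↦ (hS' w hw).1

theorem H2FreeOn.cliqueFreeOn_three_sdiff (hA : H2FreeOn G A) (hcard : Q.card = 4) :
    G.CliqueFreeOn (A \ Q : Finset V) 3 := by
  intro S hS hS3
  have hS' : ∀ w ∈ S, w ∈ A ∧ w ∉ Q := fun w hw ↦ Finset.mem_sdiff.1 (hS hw)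
  obtain ⟨q, hq, hadj⟩ := exists_forall_adj_of_card_lt
    (fun w hw ↦ h w (hS' w hw).1 (hS' w hw).2) (by rw [hS3.card_eq, hcard]; norm_num)
  obtain ⟨x, hx, y, hy, hxy⟩ := Finset.one_lt_card.1 (by rw [hS3.card_eq]; norm_num : 1 < S.card)
  obtain ⟨b, hb, hbadj⟩ := exists_forall_adj_of_card_lt (G := G) (S := {x, y}) (Q := Q.erase q)
    (fun w hw a ha a' ha' ↦ by
      have hwS : w ∈ S := by
        rcases Finset.mem_insert.1 hw with rfl | hw
        exacts [hx, Finset.mem_singleton.1 hw ▸ hy]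
      exact h w (hS' w hwS).1 (hS' w hwS).2 a (Finset.mem_of_mem_erase ha) a'
        (Finset.mem_of_mem_erase ha'))
    (by rw [Finset.card_pair hxy, Finset.card_erase_of_mem hq, hcard]; norm_num)
  obtain ⟨hbq, hbQ⟩ := Finset.mem_erase.1 hb
  refine hxy (hA (insert q S) ?_ (hS3.insert fun w hw ↦ (hadj w hw).symm) b (hQA hbQ) ?_
    ⟨by simp [hx], (hbadj x (by simp)).symm⟩ ⟨by simp [hy], (hbadj y (by simp)).symm⟩)
  · exact_mod_cast Finset.insert_subset (hQA hq) fun w hw ↦ (hS' w hw).1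
  · simpa [hbq] using fun hbS ↦ (hS' b hbS).2 hbQ

end Sdiff

end CoveredClique

section Ramsey

variable {V : Type*} {G : SimpleGraph V}

/-- `RamseyBound V s t n` says that a set of vertices of `V` whose pairs are covered by two graphs,
one without `s`-clique and the other without `t`-clique on this set, has at most `n` elements; it
expresses `R(s, t) ≤ n + 1`. -/
def RamseyBound (V : Type*) (s t n : ℕ) : Prop :=
  ∀ (G H : SimpleGraph V) (Z : Finset V), (G ⊔ H).IsClique Z → G.CliqueFreeOn Z s →
    H.CliqueFreeOn Z t → Z.card ≤ n

theorem RamseyBound.symm {s t n : ℕ} (h : RamseyBound V s t n) : RamseyBound V t s n :=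
  fun G H Z hZ hG hH ↦ h H G Z (by rwa [sup_comm]) hH hG

theorem ramseyBound_two (t : ℕ) : RamseyBound V 2 (t + 1) t := by
  intro G H Z hZ hG hH
  by_contra! hlt
  obtain ⟨s, hsZ, hs⟩ := Finset.exists_subset_card_eq hlt
  refine hH (by simpa using hsZ) ⟨fun x hx y hy hxy ↦ ?_, hs⟩
  exact (hZ (hsZ hx) (hsZ hy) hxy).resolve_left ((cliqueFreeOn_two G).1 hG (hsZ hx) (hsZ hy) hxy)

variable {H : SimpleGraph V} {Z : Finset V} {s t a b : ℕ}

theorem RamseyBound.card_filter_adj_le [DecidableRel G.Adj] (h : RamseyBound V s t a)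
    (hZ : (G ⊔ H).IsClique Z) (hG : G.CliqueFreeOn Z (s + 1)) (hH : H.CliqueFreeOn Z t)
    {x : V} (hx : x ∈ Z) : (Z.filter (G.Adj x)).card ≤ a :=
  h G H _ (hZ.subset (Finset.filter_subset _ _))
    ((hG.of_succ G hx).subset G fun y hy ↦ by simpa using hy)
    (hH.subset H (Finset.filter_subset _ _))

theorem card_le_card_filter_adj_add [DecidableRel G.Adj] [DecidableRel H.Adj]
    (hZ : (G ⊔ H).IsClique Z) {x : V} (hx : x ∈ Z) :
    Z.card ≤ (Z.filter (G.Adj x)).card + (Z.filter (H.Adj x)).card + 1 := by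
  classical
  have hsub : Z.erase x ⊆ Z.filter (G.Adj x) ∪ Z.filter (H.Adj x) := fun y hy ↦ by
    obtain ⟨hyx, hyZ⟩ := Finset.mem_erase.1 hy
    simpa [hyZ] using hZ hx hyZ hyx.symm
  have := (Finset.card_le_card hsub).trans (Finset.card_union_le _ _)
  have := Finset.card_erase_add_one hx
  omega

theorem RamseyBound.succ (ha : RamseyBound V s (t + 1) a) (hb : RamseyBound V (s + 1) t b) :
    RamseyBound V (s + 1) (t + 1) (a + b + 1) := by
  classical
  intro G H Z hZ hG hH
  obtain rfl | ⟨x, hx⟩ := Z.eq_empty_or_nonempty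
  · simp
  have := ha.card_filter_adj_le hZ hG hH hx
  have := hb.symm.card_filter_adj_le (by rwa [sup_comm]) hH hG hx
  have := card_le_card_filter_adj_add hZ hx
  omega

theorem even_sum_card_filter_adj [DecidableRel G.Adj] (Z : Finset V) :
    Even (∑ x ∈ Z, (Z.filter (G.Adj x)).card) := by
  classical
  have hdeg (x : Z) : (G.induce (Z : Set V)).degree x = (Z.filter (G.Adj x)).card := by
    rw [← card_neighborFinset_eq_degree]
    refine Finset.card_bij (fun y _ ↦ y) ?_ ?_ ?_
    · simp
    · simp
    · simp +contextual
  have := (G.induce (Z : Set V)).sum_degrees_eq_twice_card_edges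
  rw [← Finset.sum_coe_sort]
  exact ⟨_, (Finset.sum_congr rfl fun x _ ↦ (hdeg x).symm).trans (this.trans (two_mul _))⟩

theorem RamseyBound.succ_of_odd (ha : RamseyBound V s (t + 1) a) (hb : RamseyBound V (s + 1) t b)
    (ha_odd : Odd a) (hb_odd : Odd b) : RamseyBound V (s + 1) (t + 1) (a + b) := by
  classical
  intro G H Z hZ hG hH
  by_contra! hlt
  have hcard : Z.card = a + b + 1 := le_antisymm (ha.succ hb G H Z hZ hG hH) hlt
  have hdeg : ∀ x ∈ Z, (Z.filter (G.Adj x)).card = a := fun x hx ↦ by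
    have := ha.card_filter_adj_le hZ hG hH hx
    have := hb.symm.card_filter_adj_le (by rwa [sup_comm]) hH hG hx
    have := card_le_card_filter_adj_add hZ hx
    omega
  have heven := even_sum_card_filter_adj (G := G) Z
  rw [Finset.sum_const_nat hdeg, hcard] at heven
  exact (Nat.not_even_iff_odd.2 ((ha_odd.add_odd hb_odd).add_one.mul ha_odd)) heven

theorem ramseyBound_three_three : RamseyBound V 3 3 5 :=
  (ramseyBound_two 2).succ (ramseyBound_two 2).symm

theorem ramseyBound_three_four : RamseyBound V 3 4 8 :=
  (ramseyBound_two 3).succ_of_odd ramseyBound_three_three (by decide) (by decide)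

theorem ramseyBound_four_four : RamseyBound V 4 4 17 :=
  ramseyBound_three_four.succ ramseyBound_three_four.symm

end Ramsey

section Coloring

variable {V K : Type*} {c : Sym2 V → K} {i j : K} {x y : V}

/-- The graph formed by the edges of colour `i`. An edge-colouring of the complete graph on `V` is
encoded as a function on `Sym2 V`, whose values on the diagonal play no role. -/
def colorClass (c : Sym2 V → K) (i : K) : SimpleGraph V :=
  SimpleGraph.fromEdgeSet (c ⁻¹' {i})

@[simp]
theorem colorClass_adj : (colorClass c i).Adj x y ↔ c s(x, y) = i ∧ x ≠ y := by
  simp [colorClass]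

/-- A colouring is Gallai if it has no rainbow triangle. -/
def IsGallai (c : Sym2 V → K) : Prop :=
  ∀ ⦃x y z : V⦄, x ≠ y → x ≠ z → y ≠ z →
    c s(x, y) = c s(x, z) ∨ c s(x, y) = c s(y, z) ∨ c s(x, z) = c s(y, z)

end Coloring

section GallaiPartition

theorem mem_of_reachable {V : Type*} {G : SimpleGraph V} {S : Set V}
    (hS : ∀ ⦃x y⦄, x ∈ S → G.Adj x y → y ∈ S) {x y : V} (h : G.Reachable x y) (hx : x ∈ S) :
    y ∈ S := by
  obtain ⟨w⟩ := h
  induction w with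
  | nil => exact hx
  | cons hadj _ ih => exact ih (hS hx hadj)

variable {V K : Type*} {c : Sym2 V → K} {A B : Finset V} {i j : K} {u v w x y : V}

/-- The graph on `A` formed by the edges whose colour is neither `i` nor `j`. Its connected
components are the blocks of the Gallai partition. -/
def offGraph (c : Sym2 V → K) (A : Finset V) (i j : K) : SimpleGraph V where
  Adj x y := x ∈ A ∧ y ∈ A ∧ x ≠ y ∧ c s(x, y) ≠ i ∧ c s(x, y) ≠ j
  symm.symm x y h := by
    rw [Sym2.eq_swap]
    exact ⟨h.2.1, h.1, h.2.2.1.symm, h.2.2.2⟩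
  loopless.irrefl x h := h.2.2.1 rfl

theorem mem_of_offGraph_reachable (h : (offGraph c A i j).Reachable x y) (hx : x ∈ A) : y ∈ A :=
  mem_of_reachable (S := A) (fun _ _ _ (hadj : (offGraph c A i j).Adj _ _) ↦ hadj.2.1) h hx

theorem color_mem_of_not_reachable (hx : x ∈ A) (hy : y ∈ A)
    (h : ¬ (offGraph c A i j).Reachable x y) : c s(x, y) = i ∨ c s(x, y) = j := by
  by_contra! hc
  exact h (Adj.reachable ⟨hx, hy, fun hxy ↦ h (hxy ▸ .refl x), hc⟩)

theorem IsGallai.color_eq_of_reachable (hc : IsGallai c) (hw : w ∈ A)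
    (hxw : ¬ (offGraph c A i j).Reachable x w) (hxy : (offGraph c A i j).Reachable x y) :
    c s(x, w) = c s(y, w) := by
  obtain ⟨p⟩ := hxy
  induction p with
  | nil => rfl
  | @cons x x' y hadj _ ih =>
    have hx'w : ¬ (offGraph c A i j).Reachable x' w := fun h ↦ hxw (hadj.reachable.trans h)
    refine Eq.trans ?_ (ih hx'w)
    obtain ⟨hx, hx', hne, hi, hj⟩ := hadj
    have hne_w : ∀ {z}, ¬ (offGraph c A i j).Reachable z w → z ≠ w := fun h hzw ↦ h (hzw ▸ .refl _)
    have hcx := color_mem_of_not_reachable hx hw hxw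
    have hcx' := color_mem_of_not_reachable hx' hw hx'w
    rcases hc hne (hne_w hxw) (hne_w hx'w) with h | h | h
    · rw [h] at hi hj
      exact absurd hcx (by tauto)
    · rw [h] at hi hj
      exact absurd hcx' (by tauto)
    · exact h

theorem not_reachable_insert [DecidableEq V] (hv : v ∉ B) (hu : u ∈ B)
    (h : ∀ z ∈ B, (offGraph c B i j).Reachable u z → c s(v, z) = i ∨ c s(v, z) = j) :
    ¬ (offGraph c (insert v B) i j).Reachable u v := by
  intro huv
  refine hv (mem_of_offGraph_reachable (mem_of_reachable
    (S := {z | (offGraph c B i j).Reachable u z}) (fun x y hx hxy ↦ ?_) huv (.refl u)) hu)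
  have hxB := mem_of_offGraph_reachable hx hu
  obtain ⟨-, hy, hne, hi, hj⟩ := hxy
  rcases Finset.mem_insert.1 hy with rfl | hyB
  · rw [Sym2.eq_swap] at hi hj
    exact absurd (h x hxB hx) (by tauto)
  · exact Reachable.trans hx (Adj.reachable ⟨hxB, hyB, hne, hi, hj⟩)

theorem not_reachable_of_forall_color_mem (huv : u ≠ v)
    (h : ∀ z ∈ A, z ≠ v → c s(v, z) = i ∨ c s(v, z) = j) :
    ¬ (offGraph c A i j).Reachable v u := by
  intro hvu
  refine huv (mem_of_reachable (S := {v}) (fun x y hx hxy ↦ ?_) hvu rfl)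
  obtain rfl : x = v := hx
  exact absurd (h y hxy.2.1 hxy.2.2.1.symm) (by have := hxy.2.2.2; tauto)

theorem IsGallai.exists_off_color (hc : IsGallai c) (hv : v ∉ B)
    (hdisc : ∃ x ∈ B, ∃ y ∈ B, ¬ (offGraph c B i j).Reachable x y)
    (hoff : ∀ u ∈ B, ∃ z ∈ B, (offGraph c B i j).Reachable u z ∧ c s(v, z) ≠ i ∧ c s(v, z) ≠ j) :
    ∃ q, ∀ z ∈ B, c s(v, z) = i ∨ c s(v, z) = j ∨ c s(v, z) = q := by
  have hdiff : ∀ z ∈ B, ∀ z' ∈ B, ¬ (offGraph c B i j).Reachable z z' →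
      c s(v, z) ≠ i ∧ c s(v, z) ≠ j → c s(v, z') ≠ i ∧ c s(v, z') ≠ j →
      c s(v, z) = c s(v, z') := by
    intro z hz z' hz' hzz' hcz hcz'
    have hmem := color_mem_of_not_reachable hz hz' hzz'
    rcases hc (ne_of_mem_of_not_mem hz hv).symm (ne_of_mem_of_not_mem hz' hv).symm
      (fun h ↦ hzz' (h ▸ .refl z)) with h | h | h
    · exact h
    · exact absurd hmem (by rw [← h]; tauto)
    · exact absurd hmem (by rw [← h]; tauto)
  obtain ⟨x, hx, y, hy, hxy⟩ := hdisc
  obtain ⟨a, ha, hxa, hca⟩ := hoff x hx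
  obtain ⟨b, hb, hyb, hcb⟩ := hoff y hy
  have hab : ¬ (offGraph c B i j).Reachable a b := fun h ↦
    hxy ((hxa.trans h).trans hyb.symm)
  refine ⟨c s(v, a), fun z hz ↦ ?_⟩
  by_contra! hcz
  obtain ⟨hi, hj, hne⟩ := hcz
  have hza : (offGraph c B i j).Reachable z a := by
    by_contra h
    exact hne (hdiff z hz a ha h ⟨hi, hj⟩ hca)
  have hzb : ¬ (offGraph c B i j).Reachable z b := fun h ↦ hab (hza.symm.trans h)
  exact hne ((hdiff z hz b hb hzb ⟨hi, hj⟩ hcb).trans (hdiff a ha b hb hab hca hcb).symm)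

theorem IsGallai.color_eq_of_not_reachable (hc : IsGallai c) (hv : v ∉ B)
    (hoff : ∀ u ∈ B, ∃ z ∈ B, (offGraph c B i j).Reachable u z ∧ c s(v, z) ≠ i ∧ c s(v, z) ≠ j)
    (hu : u ∈ B) (hw : w ∈ B) (huw : ¬ (offGraph c B i j).Reachable u w)
    (hvu : c s(v, u) = i ∨ c s(v, u) = j) : c s(u, w) = c s(v, u) := by
  obtain ⟨z, hz, hwz, hzi, hzj⟩ := hoff w hw
  have huz : ¬ (offGraph c B i j).Reachable u z := fun h ↦ huw (h.trans hwz.symm)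
  have hwu : ¬ (offGraph c B i j).Reachable w u := fun h ↦ huw h.symm
  have hcuz : c s(u, z) = c s(u, w) := by
    rw [Sym2.eq_swap, ← hc.color_eq_of_reachable hu hwu hwz, Sym2.eq_swap]
  have hmem := color_mem_of_not_reachable hu hz huz
  rw [← hcuz]
  rcases hc (ne_of_mem_of_not_mem hu hv).symm (ne_of_mem_of_not_mem hz hv).symm
    (fun h ↦ huz (h ▸ .refl u)) with h | h | h
  · exact absurd hvu (by rw [h]; tauto)
  · exact h.symm
  · exact absurd hmem (by rw [← h]; tauto)

theorem IsGallai.left_eq_right_of_color_eq (hc : IsGallai c) (hv : v ∉ B)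
    (hdisc : ∃ x ∈ B, ∃ y ∈ B, ¬ (offGraph c B i j).Reachable x y)
    (hoff : ∀ u ∈ B, ∃ z ∈ B, (offGraph c B i j).Reachable u z ∧ c s(v, z) ≠ i ∧ c s(v, z) ≠ j)
    {u' : V} (hu : u ∈ B) (hu' : u' ∈ B) (hui : c s(v, u) = i) (hu'j : c s(v, u') = j) :
    i = j := by
  have key := fun {u w} ↦ hc.color_eq_of_not_reachable (u := u) (w := w) hv hoff
  by_cases huu' : (offGraph c B i j).Reachable u u'
  · obtain ⟨w, hw, huw⟩ : ∃ w ∈ B, ¬ (offGraph c B i j).Reachable u w := by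
      by_contra! h
      obtain ⟨x, hx, y, hy, hxy⟩ := hdisc
      exact hxy ((h x hx).symm.trans (h y hy))
    rw [← hui, ← hu'j, ← key hu hw huw (.inl hui), hc.color_eq_of_reachable hw huw huu',
      key hu' hw (fun h ↦ huw (huu'.trans h)) (.inr hu'j)]
  · rw [← hui, ← hu'j, ← key hu hu' huu' (.inl hui), Sym2.eq_swap,
      key hu' hu (fun h ↦ huu' h.symm) (.inr hu'j)]

theorem IsGallai.exists_offGraph_insert_not_reachable [DecidableEq V] (hc : IsGallai c)
    (hv : v ∉ B) (hdisc : ∃ x ∈ B, ∃ y ∈ B, ¬ (offGraph c B i j).Reachable x y) :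
    ∃ i j, ∃ u ∈ B, ¬ (offGraph c (insert v B) i j).Reachable u v := by
  by_cases hoff : ∀ u ∈ B, ∃ z ∈ B,
      (offGraph c B i j).Reachable u z ∧ c s(v, z) ≠ i ∧ c s(v, z) ≠ j
  swap
  · push Not at hoff
    obtain ⟨u, hu, h⟩ := hoff
    exact ⟨i, j, u, hu, not_reachable_insert hv hu fun z hz huz ↦ by have := h z hz huz; tauto⟩
  obtain ⟨q, hq⟩ := hc.exists_off_color hv hdisc hoff
  obtain ⟨p, hp⟩ : ∃ p, ∀ z ∈ B, c s(v, z) = p ∨ c s(v, z) = q := by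
    by_cases hi : ∃ u ∈ B, c s(v, u) = i
    · obtain ⟨u, hu, hui⟩ := hi
      refine ⟨i, fun z hz ↦ ?_⟩
      have := hq z hz
      have := hc.left_eq_right_of_color_eq hv hdisc hoff hu hz hui
      grind
    · exact ⟨j, fun z hz ↦ (hq z hz).resolve_left fun h ↦ hi ⟨z, hz, h⟩⟩
  obtain ⟨u, hu, -⟩ := hdisc
  refine ⟨p, q, u, hu, fun huv ↦ not_reachable_of_forall_color_mem
    (ne_of_mem_of_not_mem hu hv) (fun z hz hzv ↦ ?_) huv.symm⟩
  exact hp z (Finset.mem_of_mem_insert_of_ne hz hzv)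

theorem IsGallai.exists_offGraph_not_reachable (hc : IsGallai c) (hA : 1 < A.card) :
    ∃ i j, ∃ x ∈ A, ∃ y ∈ A, ¬ (offGraph c A i j).Reachable x y := by
  classical
  induction A using Finset.induction with
  | empty => simp at hA
  | insert v B hv ih =>
    by_cases hB : 1 < B.card
    · obtain ⟨i, j, hdisc⟩ := ih hB
      obtain ⟨i, j, u, hu, h⟩ := hc.exists_offGraph_insert_not_reachable hv hdisc
      exact ⟨i, j, u, Finset.mem_insert_of_mem hu, v, Finset.mem_insert_self v B, h⟩
    · rw [Finset.card_insert_of_notMem hv] at hA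
      obtain ⟨u, rfl⟩ := Finset.card_eq_one.1 (by omega : B.card = 1)
      have huv : u ≠ v := fun h ↦ hv (by simp [h])
      refine ⟨c s(v, u), c s(v, u), v, by simp, u, by simp,
        not_reachable_of_forall_color_mem huv fun z hz hzv ↦ ?_⟩
      simp_all

/-- The fibres of `p` form a Gallai partition of `A`: between two distinct blocks all edges have
the same colour, which is `i` or `j`. -/
structure IsGallaiPartition {ι : Type*} (c : Sym2 V → K) (A : Finset V) (p : V → ι) (i j : K) :
    Prop where
  color_eq : ∀ ⦃x x' y⦄, x ∈ A → x' ∈ A → y ∈ A → p x = p x' → p x ≠ p y → c s(x, y) = c s(x', y)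
  color_mem : ∀ ⦃x y⦄, x ∈ A → y ∈ A → p x ≠ p y → c s(x, y) = i ∨ c s(x, y) = j

theorem IsGallai.exists_isGallaiPartition (hc : IsGallai c) (hA : 1 < A.card) :
    ∃ i j, ∃ p : V → (offGraph c A i j).ConnectedComponent, IsGallaiPartition c A p i j ∧
      ∃ x ∈ A, ∃ y ∈ A, p x ≠ p y := by
  obtain ⟨i, j, x, hx, y, hy, hxy⟩ := hc.exists_offGraph_not_reachable hA
  refine ⟨i, j, (offGraph c A i j).connectedComponentMk, ⟨?_, ?_⟩, x, hx, y, hy, ?_⟩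
  · intro x x' y _ _ hy hxx' hxy
    exact hc.color_eq_of_reachable hy (by rwa [← ConnectedComponent.eq])
      (ConnectedComponent.exact hxx')
  · intro x y hx hy hxy
    exact color_mem_of_not_reachable hx hy (by rwa [← ConnectedComponent.eq])
  · rwa [Ne, ConnectedComponent.eq]

end GallaiPartition

section Blocks

variable {V K ι : Type*} {c : Sym2 V → K} {A : Finset V} {p : V → ι} {i j k : K} {x y : V}

open scoped Classical in
/-- The part of `A` carrying the same label `p` as `x`: the block of `x` in a Gallai partition. -/
noncomputable def block (A : Finset V) (p : V → ι) (x : V) : Finset V :=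
  {y ∈ A | p y = p x}

open scoped Classical in
/-- The vertices of `A` outside the block of `x` joined to `x` in colour `k`. In a Gallai partition
it is completely joined in colour `k` to the block of `x`. -/
noncomputable def outerNbhd (c : Sym2 V → K) (A : Finset V) (p : V → ι) (k : K) (x : V) :
    Finset V :=
  {y ∈ A | p x ≠ p y ∧ c s(x, y) = k}

@[simp]
theorem mem_block : y ∈ block A p x ↔ y ∈ A ∧ p y = p x := by simp [block]

@[simp]
theorem mem_outerNbhd : y ∈ outerNbhd c A p k x ↔ y ∈ A ∧ p x ≠ p y ∧ c s(x, y) = k := by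
  simp [outerNbhd]

theorem mem_block_self (hx : x ∈ A) : x ∈ block A p x := mem_block.2 ⟨hx, rfl⟩

theorem block_subset : block A p x ⊆ A := fun _ hy ↦ (mem_block.1 hy).1

theorem outerNbhd_subset : outerNbhd c A p k x ⊆ A := fun _ hy ↦ (mem_outerNbhd.1 hy).1

namespace IsGallaiPartition

variable (h : IsGallaiPartition c A p i j)
include h

theorem symm : IsGallaiPartition c A p j i :=
  ⟨h.color_eq, fun _ _ hx hy hxy ↦ (h.color_mem hx hy hxy).symm⟩

theorem isCompleteBetween (hx : x ∈ A) (k : K) :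
    (colorClass c k).IsCompleteBetween (block A p x) (outerNbhd c A p k x) := by
  intro y hy z hz
  simp only [Finset.mem_coe, mem_block, mem_outerNbhd] at hy hz
  obtain ⟨⟨hyA, hyx⟩, hzA, hxz, hk⟩ := And.intro hy hz
  rw [colorClass_adj]
  exact ⟨(h.color_eq hx hyA hzA hyx.symm hxz).symm.trans hk, fun hyz ↦ hxz (hyz ▸ hyx.symm)⟩

theorem card_le (hx : x ∈ A) :
    A.card ≤ (block A p x).card + (outerNbhd c A p i x).card + (outerNbhd c A p j x).card := by
  classical
  refine (Finset.card_le_card fun y hy ↦ ?_).trans ((Finset.card_union_le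
    (block A p x ∪ outerNbhd c A p i x) (outerNbhd c A p j x)).trans
    (Nat.add_le_add_right (Finset.card_union_le _ _) _))
  by_cases hxy : p x = p y
  · simp [hy, hxy]
  · rcases h.color_mem hx hy hxy with hc | hc <;> simp [hy, hxy, hc]

theorem block_subset_outerNbhd (hx : x ∈ A) (hy : y ∈ outerNbhd c A p k x) :
    block A p y ⊆ outerNbhd c A p k x := by
  intro z hz
  simp only [mem_outerNbhd, mem_block] at hy hz ⊢
  refine ⟨hz.1, hz.2 ▸ hy.2.1, ?_⟩
  rw [Sym2.eq_swap, h.color_eq hz.1 hy.1 hx hz.2 (hz.2 ▸ hy.2.1.symm), Sym2.eq_swap, hy.2.2]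

theorem isCompleteBetween_block_sdiff [DecidableEq V] {N : Finset V} (hNA : N ⊆ A)
    (hN : (colorClass c i).CliqueFreeOn N 2) (hyN : block A p y ⊆ N) :
    (colorClass c j).IsCompleteBetween (block A p y) (N \ block A p y : Finset V) := by
  intro u hu v hv
  obtain ⟨hvN, hvy⟩ := Finset.mem_sdiff.1 (Finset.mem_coe.1 hv)
  have huN := hyN hu
  simp only [Finset.mem_coe, mem_block] at hu hvy
  have hpuv : p u ≠ p v := fun huv ↦ hvy ⟨hNA hvN, huv.symm.trans hu.2⟩
  have huv : u ≠ v := fun huv ↦ hpuv (huv ▸ rfl)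
  refine colorClass_adj.2 ⟨(h.color_mem hu.1 (hNA hvN) hpuv).resolve_left fun hcol ↦ ?_, huv⟩
  exact (cliqueFreeOn_two _).1 hN huN hvN huv (colorClass_adj.2 ⟨hcol, huv⟩)

theorem card_le_mul_of_ramseyBound {s t N n : ℕ} (hR : RamseyBound V s t N)
    (hi : (colorClass c i).CliqueFreeOn A s) (hj : (colorClass c j).CliqueFreeOn A t)
    (hn : ∀ x ∈ A, (block A p x).card ≤ n) : A.card ≤ N * n := by
  classical
  obtain ⟨T, hTA, hinj, himage⟩ := Finset.exists_subset_injOn_image_eq_of_surjOn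
    (t := A.image p) (f := p) A (by simp [Set.SurjOn])
  have hT : (colorClass c i ⊔ colorClass c j).IsClique T := fun x hx y hy hxy ↦ by
    simpa [hxy] using h.color_mem (hTA hx) (hTA hy) (hinj.ne hx hy hxy)
  have hcard : T.card ≤ N := hR _ _ T hT (hi.subset _ (by simpa using hTA))
    (hj.subset _ (by simpa using hTA))
  calc A.card ≤ n * (A.image p).card := Finset.card_le_mul_card_image A n fun a ha ↦ by
        obtain ⟨x, hx, rfl⟩ := Finset.mem_image.1 ha
        convert hn x hx
        ext y
        simp
    _ = T.card * n := by rw [← himage, Finset.card_image_of_injOn hinj, mul_comm]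
    _ ≤ N * n := Nat.mul_le_mul_right n hcard

end IsGallaiPartition

end Blocks

section Levels

variable {V K : Type*} {G : SimpleGraph V} {c : Sym2 V → K} {A B : Set V} {s : Fin 3}
  {ℓ : K → Fin 3} {i : K}

/-- The three restrictions imposed on a colour class in the induction: no edge (level `0`), no
triangle (level `1`), no copy of `H₂` (level `2`). -/
def AvoidsOn (G : SimpleGraph V) (A : Set V) : Fin 3 → Prop
  | 0 => G.CliqueFreeOn A 2
  | 1 => G.CliqueFreeOn A 3
  | 2 => H2FreeOn G A

theorem AvoidsOn.subset (h : AvoidsOn G A s) (hBA : B ⊆ A) : AvoidsOn G B s :=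
  match s, h with
  | 0, h | 1, h => CliqueFreeOn.subset G hBA h
  | 2, h => H2FreeOn.mono h hBA

/-- Every colour class respects on `A` the restriction that `ℓ` assigns to its colour. -/
def Avoids (c : Sym2 V → K) (A : Set V) (ℓ : K → Fin 3) : Prop :=
  ∀ k, AvoidsOn (colorClass c k) A (ℓ k)

theorem Avoids.avoidsOn {k : K} (h : Avoids c A ℓ) (hk : ℓ k = s) :
    AvoidsOn (colorClass c k) A s :=
  hk ▸ h k

theorem Avoids.subset (h : Avoids c A ℓ) (hBA : B ⊆ A) : Avoids c B ℓ :=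
  fun k ↦ (h k).subset hBA

theorem Avoids.update [DecidableEq K] (h : Avoids c A ℓ) (hs : AvoidsOn (colorClass c i) A s) :
    Avoids c A (Function.update ℓ i s) := by
  intro k
  obtain rfl | hk := eq_or_ne k i
  · rwa [Function.update_self]
  · rw [Function.update_of_ne hk]
    exact h k

end Levels

section Bounds

/-- The number `2^{m mod 2} 5^{⌊m/2⌋} 4^{r mod 2} 17^{⌊r/2⌋}`, which is the largest order of a
Gallai colouring where `m` colours avoid `K₃` and `r` further colours avoid `H₁`, or `H₂`. -/
def mixBound (m r : ℕ) : ℕ :=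
  2 ^ (m % 2) * 5 ^ (m / 2) * (4 ^ (r % 2) * 17 ^ (r / 2))

theorem mixBound_add_two_left (m r : ℕ) : mixBound (m + 2) r = 5 * mixBound m r := by
  simp only [mixBound, Nat.add_mod_right, Nat.add_div_right m two_pos, pow_succ]
  ring

theorem mixBound_add_two_right (m r : ℕ) : mixBound m (r + 2) = 17 * mixBound m r := by
  simp only [mixBound, Nat.add_mod_right, Nat.add_div_right r two_pos, pow_succ]
  ring

theorem mixBound_pos (m r : ℕ) : 0 < mixBound m r := by
  unfold mixBound
  positivity

/-- The values of `mixBound` at `(m, r)`, `(m + 1, r)`, `(m + 2, r)`, `(m, r + 1)`, `(m + 1, r + 1)`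
and `(m, r + 2)` as multiples of `5^{⌊m/2⌋} 17^{⌊r/2⌋}`, for the four parities of `m` and `r`. It
makes comparisons between these values a matter of linear arithmetic. -/
def IsBoundTable (b₀₀ b₁₀ b₂₀ b₀₁ b₁₁ b₀₂ : ℕ) : Prop :=
  ∃ W, 1 ≤ W ∧
    (b₀₀ = W ∧ b₁₀ = 2 * W ∧ b₂₀ = 5 * W ∧ b₀₁ = 4 * W ∧ b₁₁ = 8 * W ∧ b₀₂ = 17 * W ∨
      b₀₀ = 2 * W ∧ b₁₀ = 5 * W ∧ b₂₀ = 10 * W ∧ b₀₁ = 8 * W ∧ b₁₁ = 20 * W ∧ b₀₂ = 34 * W ∨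
      b₀₀ = 4 * W ∧ b₁₀ = 8 * W ∧ b₂₀ = 20 * W ∧ b₀₁ = 17 * W ∧ b₁₁ = 34 * W ∧ b₀₂ = 68 * W ∨
      b₀₀ = 8 * W ∧ b₁₀ = 20 * W ∧ b₂₀ = 40 * W ∧ b₀₁ = 34 * W ∧ b₁₁ = 85 * W ∧ b₀₂ = 136 * W)

theorem isBoundTable_mixBound (m r : ℕ) :
    IsBoundTable (mixBound m r) (mixBound (m + 1) r) (mixBound (m + 2) r) (mixBound m (r + 1))
      (mixBound (m + 1) (r + 1)) (mixBound m (r + 2)) := by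
  have hsucc (n : ℕ) : n % 2 = 0 ∧ (n + 1) % 2 = 1 ∧ (n + 1) / 2 = n / 2 ∨
      n % 2 = 1 ∧ (n + 1) % 2 = 0 ∧ (n + 1) / 2 = n / 2 + 1 := by omega
  refine ⟨5 ^ (m / 2) * 17 ^ (r / 2), Nat.mul_pos (by positivity) (by positivity), ?_⟩
  rw [mixBound_add_two_left, mixBound_add_two_right]
  obtain ⟨hm, hm1, hm2⟩ | ⟨hm, hm1, hm2⟩ := hsucc m <;>
  obtain ⟨hr, hr1, hr2⟩ | ⟨hr, hr1, hr2⟩ := hsucc r <;>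
  simp only [mixBound, hm, hm1, hm2, hr, hr1, hr2, pow_succ, pow_zero] <;>
  [left; (right; right; left); (right; left); (right; right; right)] <;>
  refine ⟨?_, ?_, ?_, ?_, ?_, ?_⟩ <;> ring

open Finset Function

variable {K : Type*} [Fintype K] [DecidableEq K] {ℓ : K → Fin 3} {i j : K}

/-- The bound `mixBound m r`, where `m` and `r` count the colours of level `1` and `2`. -/
def levelBound (ℓ : K → Fin 3) : ℕ :=
  mixBound #{k | ℓ k = 1} #{k | ℓ k = 2}

theorem card_filter_update_eq {a : Fin 3} (ha : a ≠ 0) (hi : ℓ i = 0) (s : Fin 3) :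
    #{k | update ℓ i s k = a} = #{k | ℓ k = a} + if s = a then 1 else 0 := by
  have hmem : i ∉ ({k | ℓ k = a} : Finset K) := by simp [hi, ha.symm]
  split_ifs with hs
  · rw [← card_insert_of_notMem hmem]
    congr 1
    ext k
    by_cases hk : k = i <;> simp [update_apply, hk, hs]
  · rw [add_zero]
    congr 1
    ext k
    by_cases hk : k = i <;> simp [update_apply, hk, hs, hi, ha.symm]

theorem levelBound_update_of_eq {s : Fin 3} (hs : ℓ i = s) :
    levelBound (update ℓ i s) = levelBound ℓ := by
  rw [← hs, update_eq_self]

theorem exists_levelBound_update_eq (ℓ : K → Fin 3) (i : K) : ∃ m r, ∀ s,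
    levelBound (update ℓ i s) =
      mixBound (m + if s = 1 then 1 else 0) (r + if s = 2 then 1 else 0) := by
  refine ⟨#{k | update ℓ i 0 k = 1}, #{k | update ℓ i 0 k = 2}, fun s ↦ ?_⟩
  have hℓ : update (update ℓ i 0) i s = update ℓ i s := update_idem ..
  rw [← hℓ, levelBound, card_filter_update_eq (by decide) (update_self ..),
    card_filter_update_eq (by decide) (update_self ..)]

/-- The value of `levelBound` after resetting the levels of the colours `i` and `j` to `s` and
`t`. -/
def pairBound (ℓ : K → Fin 3) (i j : K) (s t : Fin 3) : ℕ :=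
  levelBound (update (update ℓ i s) j t)

theorem pairBound_of_eq {s t : Fin 3} (hs : ℓ i = s) (ht : ℓ j = t) :
    pairBound ℓ i j s t = levelBound ℓ := by
  rw [pairBound, ← hs, ← ht, update_eq_self, update_eq_self]

theorem exists_pairBound_eq (ℓ : K → Fin 3) (hij : i ≠ j) : ∃ m r, ∀ s t,
    pairBound ℓ i j s t = mixBound (m + (if s = 1 then 1 else 0) + if t = 1 then 1 else 0)
      (r + (if s = 2 then 1 else 0) + if t = 2 then 1 else 0) := by
  have hi : update (update ℓ j 0) i 0 i = 0 := update_self ..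
  have hj (s : Fin 3) : update (update (update ℓ j 0) i 0) i s j = 0 := by simp [hij.symm]
  refine ⟨#{k | update (update ℓ j 0) i 0 k = 1}, #{k | update (update ℓ j 0) i 0 k = 2},
    fun s t ↦ ?_⟩
  have hℓ : update (update ℓ i s) j t = update (update (update (update ℓ j 0) i 0) i s) j t := by
    rw [update_idem, update_comm hij.symm, update_idem]
  rw [pairBound, hℓ, levelBound]
  simp only [card_filter_update_eq, ne_eq, one_ne_zero, Fin.reduceEq, not_false_eq_true, hi, hj]

theorem exists_isBoundTable_levelBound_update (ℓ : K → Fin 3) (i : K) : ∃ b₂₀ b₁₁ b₀₂,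
    IsBoundTable (levelBound (update ℓ i 0)) (levelBound (update ℓ i 1)) b₂₀
      (levelBound (update ℓ i 2)) b₁₁ b₀₂ := by
  obtain ⟨m, r, h⟩ := exists_levelBound_update_eq ℓ i
  simpa [h] using ⟨_, _, _, isBoundTable_mixBound m r⟩

theorem isBoundTable_pairBound (ℓ : K → Fin 3) (hij : i ≠ j) :
    IsBoundTable (pairBound ℓ i j 0 0) (pairBound ℓ i j 1 0) (pairBound ℓ i j 1 1)
      (pairBound ℓ i j 2 0) (pairBound ℓ i j 2 1) (pairBound ℓ i j 2 2) := by
  obtain ⟨m, r, h⟩ := exists_pairBound_eq ℓ hij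
  simpa [h] using isBoundTable_mixBound m r

theorem pairBound_comm (ℓ : K → Fin 3) (hij : i ≠ j) (s t : Fin 3) :
    pairBound ℓ i j s t = pairBound ℓ i j t s := by
  obtain ⟨m, r, h⟩ := exists_pairBound_eq ℓ hij
  rw [h, h, add_right_comm m, add_right_comm r]

end Bounds

section UpperBound

open Function

variable {V K : Type*} [Fintype K] {c : Sym2 V → K} {ℓ : K → Fin 3}
  {A B Q X Y : Finset V} {i j k : K} {s t : Fin 3}

/-- The induction hypothesis of the upper bound: `levelBound` is an upper bound for all level
functions that are smaller than `ℓ`. -/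
def BoundedBelow (c : Sym2 V → K) (ℓ : K → Fin 3) : Prop :=
  ∀ ℓ' < ℓ, ∀ B : Finset V, Avoids c B ℓ' → B.card ≤ levelBound ℓ'

/-- The situation to which the induction step reduces: a set satisfying the restrictions `ℓ` with a
Gallai partition in which every block sends edges of both colours to the other blocks. -/
structure IsReduced {ι : Type*} (c : Sym2 V → K) (ℓ : K → Fin 3) (A : Finset V) (p : V → ι)
    (i j : K) : Prop where
  bounded : BoundedBelow c ℓ
  avoids : Avoids c A ℓ
  partition : IsGallaiPartition c A p i j
  ne : i ≠ j
  nonempty_left : ∀ x ∈ A, (outerNbhd c A p i x).Nonempty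
  nonempty_right : ∀ x ∈ A, (outerNbhd c A p j x).Nonempty

namespace IsReduced

variable {ι : Type*} {p : V → ι} {x : V} (h : IsReduced c ℓ A p i j)
include h

theorem symm : IsReduced c ℓ A p j i :=
  ⟨h.bounded, h.avoids, h.partition.symm, h.ne.symm, h.nonempty_right, h.nonempty_left⟩

theorem avoidsOn_left (hBA : B ⊆ A) (hs : ℓ i = s) : AvoidsOn (colorClass c i) B s :=
  (h.avoids.avoidsOn hs).subset hBA

theorem isCompleteBetween_left (hx : x ∈ A) :
    (colorClass c i).IsCompleteBetween (block A p x) (outerNbhd c A p i x) :=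
  h.partition.isCompleteBetween hx i

theorem cliqueFreeOn_block {n : ℕ} (hA : (colorClass c i).CliqueFreeOn A (n + 1)) (hx : x ∈ A) :
    (colorClass c i).CliqueFreeOn (block A p x) n :=
  cliqueFreeOn_of_isCompleteBetween_nonempty hA block_subset outerNbhd_subset
    (h.isCompleteBetween_left hx) (h.nonempty_left x hx)

theorem cliqueFreeOn_outerNbhd {m n : ℕ} (hA : (colorClass c i).CliqueFreeOn A (m + n))
    (hx : x ∈ A) (hm : ¬ (colorClass c i).CliqueFreeOn (block A p x) m) :
    (colorClass c i).CliqueFreeOn (outerNbhd c A p i x) n :=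
  cliqueFreeOn_of_isCompleteBetween hA outerNbhd_subset block_subset
    (h.isCompleteBetween_left hx).symm hm

theorem cliqueFreeOn_outerNbhd_succ {n : ℕ} (hA : (colorClass c i).CliqueFreeOn A (n + 1))
    (hx : x ∈ A) : (colorClass c i).CliqueFreeOn (outerNbhd c A p i x) n :=
  cliqueFreeOn_of_isCompleteBetween_nonempty hA outerNbhd_subset block_subset
    (h.isCompleteBetween_left hx).symm ⟨x, mem_block_self hx⟩

theorem level_ne_zero (hx : x ∈ A) : ℓ i ≠ 0 := by
  intro hi
  obtain ⟨y, hy⟩ := h.nonempty_left x hx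
  have hi2 : (colorClass c i).CliqueFreeOn A 2 := h.avoidsOn_left subset_rfl hi
  have hadj := h.isCompleteBetween_left hx (mem_block_self hx) hy
  exact (cliqueFreeOn_two _).1 hi2 hx (outerNbhd_subset hy) hadj.ne hadj

theorem block_ne_of_isNClique (hi : ℓ i = 2) (hQA : Q ⊆ A) (hQ : (colorClass c i).IsNClique 4 Q)
    (hblock : ∀ x ∈ A, (colorClass c i).CliqueFreeOn (block A p x) 3) {w q : V} (hw : w ∈ A)
    (hwQ : w ∉ Q) (hq : q ∈ Q) : p w ≠ p q := by
  classical
  intro hwq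
  have hin : (Q.filter (p · = p q)).card < 3 := by
    by_contra! hlt
    obtain ⟨T, hT, hT3⟩ := Finset.exists_subset_card_eq hlt
    refine hblock q (hQA hq) (t := T) (fun t ht ↦ ?_)
      ⟨hQ.isClique.subset (hT.trans (Finset.filter_subset _ _)), hT3⟩
    obtain ⟨htQ, htq⟩ := Finset.mem_filter.1 (hT ht)
    simpa [htq] using hQA htQ
  have hout : 1 < (Q.filter (¬ p · = p q)).card := by
    have := Finset.card_filter_add_card_filter_not (s := Q) (p · = p q)
    rw [hQ.card_eq] at this
    omega
  obtain ⟨a, ha, b, hb, hab⟩ := Finset.one_lt_card.1 hout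
  -- `w` lies in the block of `q`, so it is joined in colour `i` to `Q` outside this block.
  have hadj : ∀ a ∈ Q.filter (¬ p · = p q), a ∈ (Q : Set V) ∩ (colorClass c i).neighborSet w := by
    intro a ha
    obtain ⟨haQ, haq⟩ := Finset.mem_filter.1 ha
    refine ⟨haQ, colorClass_adj.2 ⟨?_, (ne_of_mem_of_not_mem haQ hwQ).symm⟩⟩
    rw [h.partition.color_eq hw (hQA hq) (hQA haQ) hwq fun hwa ↦ haq (hwa.symm.trans hwq)]
    exact (colorClass_adj.1 (hQ.isClique hq haQ fun hqa ↦ haq (hqa ▸ rfl))).1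
  exact hab (h.avoidsOn_left subset_rfl hi Q hQA hQ w hw hwQ (hadj a ha) (hadj b hb))

theorem adj_or_adj_of_isNClique (hi : ℓ i = 2) (hQA : Q ⊆ A) (hQ : (colorClass c i).IsNClique 4 Q)
    (hblock : ∀ x ∈ A, (colorClass c i).CliqueFreeOn (block A p x) 3) :
    ∀ w ∈ A, w ∉ Q → ∀ q ∈ Q, ∀ q' ∈ Q, q ≠ q' →
      (colorClass c j).Adj w q ∨ (colorClass c j).Adj w q' := by
  intro w hw hwQ q hq q' hq' hqq'
  by_contra! hno
  have hi_adj : ∀ q ∈ Q, ¬ (colorClass c j).Adj w q →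
      q ∈ (Q : Set V) ∩ (colorClass c i).neighborSet w := by
    intro q hq hno
    have hne := (ne_of_mem_of_not_mem hq hwQ).symm
    have hpne := h.block_ne_of_isNClique hi hQA hQ hblock hw hwQ hq
    exact ⟨hq, colorClass_adj.2 ⟨(h.partition.color_mem hw (hQA hq) hpne).resolve_right
      fun hc ↦ hno (colorClass_adj.2 ⟨hc, hne⟩), hne⟩⟩
  exact hqq' (h.avoidsOn_left subset_rfl hi Q hQA hQ w hw hwQ (hi_adj q hq hno.1)
    (hi_adj q' hq' hno.2))

theorem card_outerNbhd_le_one (hi : ℓ i = 2) (hx : x ∈ A)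
    (hT : ¬ (colorClass c i).CliqueFreeOn (block A p x) 3) :
    (outerNbhd c A p i x).card ≤ 1 := by
  by_contra! hlt
  have hi2 : H2FreeOn (colorClass c i) A := h.avoidsOn_left subset_rfl hi
  exact hT (hi2.cliqueFreeOn_three block_subset outerNbhd_subset (h.isCompleteBetween_left hx)
    (Finset.one_lt_card_iff_nontrivial.1 hlt))

theorem exists_triangleFree_subset_block (hi : ℓ i = 2) (hx : x ∈ A) {B : Finset V}
    (hB : B ⊆ block A p x) :
    ∃ D ⊆ B, (colorClass c i).CliqueFreeOn D 3 ∧ 2 * B.card ≤ 3 * D.card := by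
  have hi2 : H2FreeOn (colorClass c i) A := h.avoidsOn_left subset_rfl hi
  exact hi2.exists_triangleFree_subset (hB.trans block_subset) outerNbhd_subset
    (fun _ hu _ hv ↦ h.isCompleteBetween_left hx (hB hu) hv) (h.nonempty_left x hx)

end IsReduced

theorem BoundedBelow.card_le_update [DecidableEq K] (h : BoundedBelow c ℓ) (hB : Avoids c B ℓ)
    (hs : AvoidsOn (colorClass c k) B s) (hlt : s < ℓ k) : B.card ≤ levelBound (update ℓ k s) :=
  h _ (update_lt_self_iff.2 hlt) B (hB.update hs)

theorem BoundedBelow.card_le_pairBound [DecidableEq K] (h : BoundedBelow c ℓ)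
    (hB : Avoids c B ℓ) (hij : i ≠ j) (hs : AvoidsOn (colorClass c i) B s)
    (ht : AvoidsOn (colorClass c j) B t) (hsi : s ≤ ℓ i) (htj : t ≤ ℓ j)
    (hlt : s < ℓ i ∨ t < ℓ j) : B.card ≤ pairBound ℓ i j s t := by
  have hj : update ℓ i s j = ℓ j := update_of_ne hij.symm ..
  have hlei : update ℓ i s ≤ ℓ := update_le_self_iff.2 hsi
  have hlej : update (update ℓ i s) j t ≤ update ℓ i s := update_le_self_iff.2 (hj ▸ htj)
  refine h _ ?_ B ((hB.update hs).update ht)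
  rcases hlt with hlt | hlt
  · exact hlej.trans_lt (update_lt_self_iff.2 hlt)
  · exact (update_lt_self_iff.2 (hj ▸ hlt)).trans_le hlei

section Join

variable (h : BoundedBelow c ℓ) (hA : Avoids c A ℓ) (hXA : X ⊆ A) (hYA : Y ⊆ A)
  (hXY : (colorClass c k).IsCompleteBetween X Y) (hX : X.Nonempty) (hY : Y.Nonempty)
include h hA hXA hYA hXY hX hY

theorem BoundedBelow.card_add_card_le_of_level_eq_one (hk : ℓ k = 1) :
    X.card + Y.card ≤ levelBound ℓ := by
  classical
  have hk3 : (colorClass c k).CliqueFreeOn A 3 := hA.avoidsOn hk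
  have hX2 := cliqueFreeOn_of_isCompleteBetween_nonempty hk3 hXA hYA hXY hY
  have hY2 := cliqueFreeOn_of_isCompleteBetween_nonempty hk3 hYA hXA hXY.symm hX
  have := h.card_le_update (s := 0) (hA.subset hXA) hX2 (by simp [hk])
  have := h.card_le_update (s := 0) (hA.subset hYA) hY2 (by simp [hk])
  rw [← levelBound_update_of_eq hk]
  obtain ⟨_, _, _, W, -, hW'⟩ := exists_isBoundTable_levelBound_update ℓ k
  omega

theorem BoundedBelow.card_add_one_le_of_level_eq_two (hk : ℓ k = 2) :
    X.card + 1 ≤ levelBound ℓ := by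
  classical
  have hk2 : H2FreeOn (colorClass c k) A := hA.avoidsOn hk
  obtain ⟨D, hDX, hD, hcard⟩ := hk2.exists_triangleFree_subset hXA hYA hXY hY
  have := h.card_le_update (s := 1) (hA.subset (hDX.trans hXA)) hD (by simp [hk])
  have := hX.card_pos
  rw [← levelBound_update_of_eq hk]
  obtain ⟨_, _, _, W, hW, hW'⟩ := exists_isBoundTable_levelBound_update ℓ k
  omega

theorem BoundedBelow.card_add_card_le_of_level_eq_two (hk : ℓ k = 2) :
    X.card + Y.card ≤ levelBound ℓ := by
  classical
  by_cases hX1 : X.card ≤ 1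
  · have := h.card_add_one_le_of_level_eq_two hA hYA hXA hXY.symm hY hX hk
    omega
  by_cases hY1 : Y.card ≤ 1
  · have := h.card_add_one_le_of_level_eq_two hA hXA hYA hXY hX hY hk
    omega
  have hk2 : H2FreeOn (colorClass c k) A := hA.avoidsOn hk
  have hX3 := hk2.cliqueFreeOn_three hXA hYA hXY
    (Finset.one_lt_card_iff_nontrivial.1 (not_le.1 hY1))
  have hY3 := hk2.cliqueFreeOn_three hYA hXA hXY.symm
    (Finset.one_lt_card_iff_nontrivial.1 (not_le.1 hX1))
  have := h.card_le_update (s := 1) (hA.subset hXA) hX3 (by simp [hk])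
  have := h.card_le_update (s := 1) (hA.subset hYA) hY3 (by simp [hk])
  rw [← levelBound_update_of_eq hk]
  obtain ⟨_, _, _, W, hW, hW'⟩ := exists_isBoundTable_levelBound_update ℓ k
  by_cases hsmall : X.card ≤ 2 ∧ Y.card ≤ 2
  · omega
  have hedge : (colorClass c k).CliqueFreeOn X 2 ∨ (colorClass c k).CliqueFreeOn Y 2 := by
    rcases not_and_or.1 hsmall with hX2 | hY2
    · exact hk2.cliqueFreeOn_two_or hXA hYA hXY (by omega)
    · exact (hk2.cliqueFreeOn_two_or hYA hXA hXY.symm (by omega)).symm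
  rcases hedge with hX2 | hY2
  · have := h.card_le_update (s := 0) (hA.subset hXA) hX2 (by simp [hk])
    omega
  · have := h.card_le_update (s := 0) (hA.subset hYA) hY2 (by simp [hk])
    omega

theorem BoundedBelow.card_add_card_le_of_isCompleteBetween : X.card + Y.card ≤ levelBound ℓ := by
  match hk : ℓ k with
  | 0 =>
    obtain ⟨⟨x, hx⟩, y, hy⟩ := And.intro hX hY
    have hk0 : (colorClass c k).CliqueFreeOn A 2 := hA.avoidsOn hk
    exact absurd (hXY hx hy)
      ((cliqueFreeOn_two _).1 hk0 (hXA hx) (hYA hy) (hXY hx hy).ne)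
  | 1 => exact h.card_add_card_le_of_level_eq_one hA hXA hYA hXY hX hY hk
  | 2 => exact h.card_add_card_le_of_level_eq_two hA hXA hYA hXY hX hY hk

end Join

namespace IsReduced

variable {ι : Type*} {p : V → ι} {x : V} (h : IsReduced c ℓ A p i j)
include h

theorem card_le [DecidableEq K] (hBA : B ⊆ A) (hs : AvoidsOn (colorClass c i) B s)
    (ht : AvoidsOn (colorClass c j) B t) (hsi : s ≤ ℓ i) (htj : t ≤ ℓ j)
    (hlt : s < ℓ i ∨ t < ℓ j) : B.card ≤ pairBound ℓ i j s t :=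
  h.bounded.card_le_pairBound (h.avoids.subset hBA) h.ne hs ht hsi htj hlt

theorem card_le_of_level_one_one (hi : ℓ i = 1) (hj : ℓ j = 1) : A.card ≤ levelBound ℓ := by
  classical
  have hi3 : (colorClass c i).CliqueFreeOn A 3 := h.avoidsOn_left subset_rfl hi
  have hj3 : (colorClass c j).CliqueFreeOn A 3 := h.symm.avoidsOn_left subset_rfl hj
  have := h.partition.card_le_mul_of_ramseyBound ramseyBound_three_three hi3 hj3 fun x hx ↦
    h.card_le (s := 0) (t := 0) block_subset (h.cliqueFreeOn_block hi3 hx)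
      (h.symm.cliqueFreeOn_block hj3 hx) (by simp) (by simp) (by simp [hi])
  rw [← pairBound_of_eq hi hj]
  obtain ⟨W, -, hW'⟩ := isBoundTable_pairBound ℓ h.ne
  omega

theorem card_le_of_level_one_two_of_cliqueFreeOn (hi : ℓ i = 1) (hj : ℓ j = 2)
    (hj4 : (colorClass c j).CliqueFreeOn A 4) : A.card ≤ levelBound ℓ := by
  classical
  have hi3 : (colorClass c i).CliqueFreeOn A 3 := h.avoidsOn_left subset_rfl hi
  rw [← pairBound_of_eq hi hj]
  obtain ⟨W, -, hW'⟩ := isBoundTable_pairBound ℓ h.ne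
  have h01 := pairBound_comm ℓ h.ne 0 1
  have h02 := pairBound_comm ℓ h.ne 0 2
  have h12 := pairBound_comm ℓ h.ne 1 2
  by_cases hedge : ∀ x ∈ A, (colorClass c j).CliqueFreeOn (block A p x) 2
  · have := h.partition.card_le_mul_of_ramseyBound ramseyBound_three_four hi3 hj4 fun x hx ↦
      h.card_le (s := 0) (t := 0) block_subset (h.cliqueFreeOn_block hi3 hx) (hedge x hx)
        (by simp) (by simp) (by simp [hi])
    omega
  push Not at hedge
  obtain ⟨x, hx, hxj⟩ := hedge
  have := h.card_le (s := 0) (t := 1) block_subset (h.cliqueFreeOn_block hi3 hx)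
    (h.symm.cliqueFreeOn_block hj4 hx) (by simp) (by simp [hj]) (by simp [hi])
  have := h.card_le (s := 0) (t := 2) outerNbhd_subset (h.cliqueFreeOn_outerNbhd_succ hi3 hx)
    (h.symm.avoidsOn_left outerNbhd_subset hj) (by simp) (by simp [hj]) (by simp [hi])
  have := h.card_le (s := 1) (t := 0) outerNbhd_subset (h.avoidsOn_left outerNbhd_subset hi)
    (h.symm.cliqueFreeOn_outerNbhd (m := 2) hj4 hx hxj) (by simp [hi]) (by simp) (by simp [hj])
  have := h.partition.card_le hx
  omega

theorem card_outerNbhd_le [DecidableEq K] (hi : ℓ i = 2) (hj : ℓ j = 2)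
    (hj4 : (colorClass c j).CliqueFreeOn A 4) (hx : x ∈ A)
    (hi2 : (colorClass c i).CliqueFreeOn (outerNbhd c A p i x) 2) :
    (outerNbhd c A p i x).card ≤ pairBound ℓ i j 0 0 + pairBound ℓ i j 0 1 := by
  classical
  set N := outerNbhd c A p i x
  obtain ⟨y, hy⟩ := h.nonempty_left x hx
  have hyA := outerNbhd_subset hy
  have hFN : block A p y ⊆ N := h.partition.block_subset_outerNbhd hx hy
  have hFS := h.partition.isCompleteBetween_block_sdiff outerNbhd_subset hi2 hFN
  have hS : N \ block A p y ⊆ N := Finset.sdiff_subset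
  have hSA : N \ block A p y ⊆ A := hS.trans outerNbhd_subset
  have hF3 := h.symm.cliqueFreeOn_block hj4 hyA
  have hS3 := cliqueFreeOn_of_isCompleteBetween_nonempty hj4 hSA block_subset hFS.symm
    ⟨y, mem_block_self hyA⟩
  have hbound {B : Finset V} {t : Fin 3} (hBN : B ⊆ N) (ht : AvoidsOn (colorClass c j) B t)
      (htj : t ≤ 2) : B.card ≤ pairBound ℓ i j 0 t :=
    h.card_le (hBN.trans outerNbhd_subset) (s := 0) (hi2.subset _ hBN) ht (by simp)
      (hj ▸ htj) (by simp [hi])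
  have hcard := Finset.card_sdiff_add_card_eq_card hFN
  by_cases hF2 : (colorClass c j).CliqueFreeOn (block A p y) 2
  · have := hbound (t := 0) hFN hF2 (by simp)
    have := hbound (t := 1) hS hS3 (by simp)
    omega
  · have hS2 := cliqueFreeOn_of_isCompleteBetween (m := 2) (n := 2) hj4 hSA block_subset
      hFS.symm hF2
    have := hbound (t := 1) hFN hF3 (by simp)
    have := hbound (t := 0) hS hS2 (by simp)
    omega

theorem card_le_of_edge_in_block (hi : ℓ i = 2) (hj : ℓ j = 2)
    (hi4 : (colorClass c i).CliqueFreeOn A 4) (hj4 : (colorClass c j).CliqueFreeOn A 4)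
    (hx : x ∈ A) (hxi : ¬ (colorClass c i).CliqueFreeOn (block A p x) 2) :
    A.card ≤ levelBound ℓ := by
  classical
  have hi3 := h.cliqueFreeOn_block hi4 hx
  have hj3 := h.symm.cliqueFreeOn_block hj4 hx
  have := h.card_outerNbhd_le hi hj hj4 hx (h.cliqueFreeOn_outerNbhd (m := 2) hi4 hx hxi)
  have := h.partition.card_le hx
  rw [← pairBound_of_eq hi hj]
  obtain ⟨W, -, hW'⟩ := isBoundTable_pairBound ℓ h.ne
  have h01 := pairBound_comm ℓ h.ne 0 1
  by_cases hxj : (colorClass c j).CliqueFreeOn (block A p x) 2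
  · have := h.card_le (s := 1) (t := 0) block_subset hi3 hxj (by simp [hi]) (by simp) (by simp [hi])
    have := h.card_le (s := 2) (t := 1) outerNbhd_subset (h.avoidsOn_left outerNbhd_subset hi)
      (h.symm.cliqueFreeOn_outerNbhd_succ hj4 hx) (by simp [hi]) (by simp [hj]) (by simp [hj])
    omega
  · have := h.card_le (s := 1) (t := 1) block_subset hi3 hj3 (by simp [hi]) (by simp [hj])
      (by simp [hi])
    have := h.card_le (s := 2) (t := 0) outerNbhd_subset (h.avoidsOn_left outerNbhd_subset hi)
      (h.symm.cliqueFreeOn_outerNbhd (m := 2) hj4 hx hxj) (by simp [hi]) (by simp) (by simp [hj])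
    omega

theorem card_le_of_level_two_two_of_cliqueFreeOn (hi : ℓ i = 2) (hj : ℓ j = 2)
    (hi4 : (colorClass c i).CliqueFreeOn A 4) (hj4 : (colorClass c j).CliqueFreeOn A 4) :
    A.card ≤ levelBound ℓ := by
  classical
  by_cases hedge : ∀ x ∈ A, (colorClass c i).CliqueFreeOn (block A p x) 2 ∧
      (colorClass c j).CliqueFreeOn (block A p x) 2
  · have := h.partition.card_le_mul_of_ramseyBound ramseyBound_four_four hi4 hj4 fun x hx ↦
      h.card_le (s := 0) (t := 0) block_subset (hedge x hx).1 (hedge x hx).2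
        (by simp) (by simp) (by simp [hi])
    rw [← pairBound_of_eq hi hj]
    obtain ⟨W, -, hW'⟩ := isBoundTable_pairBound ℓ h.ne
    omega
  · simp only [not_forall, not_and_or] at hedge
    obtain ⟨x, hx, hxi | hxj⟩ := hedge
    · exact h.card_le_of_edge_in_block hi hj hi4 hj4 hx hxi
    · exact h.symm.card_le_of_edge_in_block hj hi hj4 hi4 hx hxj

theorem card_le_of_level_two_one_of_triangle_in_block (hi : ℓ i = 2) (hj : ℓ j = 1) (hx : x ∈ A)
    (hT : ¬ (colorClass c i).CliqueFreeOn (block A p x) 3) : A.card ≤ levelBound ℓ := by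
  classical
  have hj3 : (colorClass c j).CliqueFreeOn A 3 := h.symm.avoidsOn_left subset_rfl hj
  have := h.card_outerNbhd_le_one hi hx hT
  obtain ⟨D, hD, hD3, hcard⟩ := h.exists_triangleFree_subset_block hi hx subset_rfl
  have := h.card_le (s := 1) (t := 0) (hD.trans block_subset) hD3
    ((h.symm.cliqueFreeOn_block hj3 hx).subset _ hD) (by simp [hi]) (by simp) (by simp [hi])
  have := h.card_le (s := 2) (t := 0) outerNbhd_subset (h.avoidsOn_left outerNbhd_subset hi)
    (h.symm.cliqueFreeOn_outerNbhd_succ hj3 hx) (by simp [hi]) (by simp) (by simp [hj])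
  have := h.partition.card_le hx
  rw [← pairBound_of_eq hi hj]
  obtain ⟨W, hW, hW'⟩ := isBoundTable_pairBound ℓ h.ne
  have h01 := pairBound_comm ℓ h.ne 0 1
  have h02 := pairBound_comm ℓ h.ne 0 2
  have h12 := pairBound_comm ℓ h.ne 1 2
  omega

theorem card_le_of_level_two_two_of_triangle_in_block (hi : ℓ i = 2) (hj : ℓ j = 2) (hx : x ∈ A)
    (hT : ¬ (colorClass c i).CliqueFreeOn (block A p x) 3) : A.card ≤ levelBound ℓ := by
  classical
  have hj2 : H2FreeOn (colorClass c j) A := h.symm.avoidsOn_left subset_rfl hj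
  have := h.card_outerNbhd_le_one hi hx hT
  obtain ⟨D, hD, hD3, hcard⟩ := h.exists_triangleFree_subset_block hi hx subset_rfl
  have := h.partition.card_le hx
  rw [← pairBound_of_eq hi hj]
  obtain ⟨W, hW, hW'⟩ := isBoundTable_pairBound ℓ h.ne
  by_cases hone : (outerNbhd c A p j x).card ≤ 1
  · obtain ⟨D', hD', hD'3, hcard'⟩ := h.symm.exists_triangleFree_subset_block hj hx hD
    have := h.card_le (s := 1) (t := 1) ((hD'.trans hD).trans block_subset) (hD3.subset _ hD') hD'3
      (by simp [hi]) (by simp [hj]) (by simp [hi])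
    omega
  have hblock : 3 ≤ (block A p x).card := by
    by_contra! hlt
    exact hT (cliqueFreeOn_of_card_lt _ hlt)
  have hcomplete := h.symm.isCompleteBetween_left hx
  have hB3 := hj2.cliqueFreeOn_three block_subset outerNbhd_subset hcomplete
    (Finset.one_lt_card_iff_nontrivial.1 (not_le.1 hone))
  have hN3 := hj2.cliqueFreeOn_three outerNbhd_subset block_subset hcomplete.symm
    (Finset.one_lt_card_iff_nontrivial.1 (by omega))
  have hDle {t : Fin 3} (ht : AvoidsOn (colorClass c j) (block A p x) t) (htj : t ≤ ℓ j) :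
      D.card ≤ pairBound ℓ i j 1 t :=
    h.card_le (hD.trans block_subset) (s := 1) hD3 (ht.subset hD) (by simp [hi]) htj (by simp [hi])
  have hNle {t : Fin 3} (ht : AvoidsOn (colorClass c j) (outerNbhd c A p j x) t) (htj : t < ℓ j) :
      (outerNbhd c A p j x).card ≤ pairBound ℓ i j 2 t :=
    h.card_le outerNbhd_subset (h.avoidsOn_left outerNbhd_subset hi) ht (by simp [hi]) htj.le
      (.inr htj)
  rcases hj2.cliqueFreeOn_two_or block_subset outerNbhd_subset hcomplete hblock with hB2 | hN2
  · have := hDle (t := 0) hB2 (by simp)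
    have := hNle (t := 1) hN3 (by simp [hj])
    omega
  · have := hDle (t := 1) hB3 (by simp [hj])
    have := hNle (t := 0) hN2 (by simp [hj])
    omega

theorem card_le_of_clique_of_triangleFree_blocks (hi : ℓ i = 2) (hj : ℓ j = 1 ∨ ℓ j = 2)
    (hQA : Q ⊆ A) (hQ : (colorClass c i).IsNClique 4 Q)
    (hblock : ∀ x ∈ A, (colorClass c i).CliqueFreeOn (block A p x) 3) : A.card ≤ levelBound ℓ := by
  classical
  have hadj := h.adj_or_adj_of_isNClique hi hQA hQ hblock
  have hsub : A \ Q ⊆ A := Finset.sdiff_subset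
  have hi2 := h.avoidsOn_left hsub hi
  have hQcard := hQ.card_eq
  have := Finset.card_sdiff_add_card_eq_card hQA
  obtain ⟨W, hW, hW'⟩ := isBoundTable_pairBound ℓ h.ne
  rcases hj with hj | hj
  · have hj3 : (colorClass c j).CliqueFreeOn A 3 := h.symm.avoidsOn_left subset_rfl hj
    have := h.card_le (t := 0) hsub hi2 (cliqueFreeOn_sdiff hadj hQA hj3 (by omega))
      (by simp [hi]) (by simp) (by simp [hj])
    rw [← pairBound_of_eq hi hj]
    omega
  · have hj2 : H2FreeOn (colorClass c j) A := h.symm.avoidsOn_left subset_rfl hj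
    have := h.card_le (t := 1) hsub hi2 (hj2.cliqueFreeOn_three_sdiff hadj hQA hQcard)
      (by simp [hi]) (by simp [hj]) (by simp [hj])
    rw [← pairBound_of_eq hi hj]
    omega

theorem card_le_of_not_cliqueFreeOn_four (hi : ℓ i = 2) (hj : ℓ j = 1 ∨ ℓ j = 2)
    (hi4 : ¬ (colorClass c i).CliqueFreeOn A 4) : A.card ≤ levelBound ℓ := by
  obtain ⟨Q, hQA, hQ⟩ : ∃ Q ⊆ A, (colorClass c i).IsNClique 4 Q := by
    simpa [CliqueFreeOn] using hi4
  by_cases hblock : ∀ x ∈ A, (colorClass c i).CliqueFreeOn (block A p x) 3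
  · exact h.card_le_of_clique_of_triangleFree_blocks hi hj hQA hQ hblock
  · push Not at hblock
    obtain ⟨x, hx, hT⟩ := hblock
    rcases hj with hj | hj
    · exact h.card_le_of_level_two_one_of_triangle_in_block hi hj hx hT
    · exact h.card_le_of_level_two_two_of_triangle_in_block hi hj hx hT

theorem card_le_of_level_one_two (hi : ℓ i = 1) (hj : ℓ j = 2) : A.card ≤ levelBound ℓ := by
  by_cases hj4 : (colorClass c j).CliqueFreeOn A 4
  · exact h.card_le_of_level_one_two_of_cliqueFreeOn hi hj hj4
  · exact h.symm.card_le_of_not_cliqueFreeOn_four hj (.inl hi) hj4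

theorem card_le_of_level_two_two (hi : ℓ i = 2) (hj : ℓ j = 2) : A.card ≤ levelBound ℓ := by
  by_cases hi4 : (colorClass c i).CliqueFreeOn A 4
  · by_cases hj4 : (colorClass c j).CliqueFreeOn A 4
    · exact h.card_le_of_level_two_two_of_cliqueFreeOn hi hj hi4 hj4
    · exact h.symm.card_le_of_not_cliqueFreeOn_four hj (.inr hi) hj4
  · exact h.card_le_of_not_cliqueFreeOn_four hi (.inr hj) hi4

theorem card_le_levelBound (hx : x ∈ A) : A.card ≤ levelBound ℓ := by
  have hi := h.level_ne_zero hx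
  have hj := h.symm.level_ne_zero hx
  obtain hi | hi : ℓ i = 1 ∨ ℓ i = 2 := by omega
  · obtain hj | hj : ℓ j = 1 ∨ ℓ j = 2 := by omega
    · exact h.card_le_of_level_one_one hi hj
    · exact h.card_le_of_level_one_two hi hj
  · obtain hj | hj : ℓ j = 1 ∨ ℓ j = 2 := by omega
    · exact h.symm.card_le_of_level_one_two hj hi
    · exact h.card_le_of_level_two_two hi hj

end IsReduced

theorem IsGallaiPartition.card_le_of_forall_color_eq {ι : Type*} {p : V → ι}
    {x y : V} {k : K} (hp : IsGallaiPartition c A p i j) (hℓ : BoundedBelow c ℓ)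
    (hA : Avoids c A ℓ) (hx : x ∈ A) (hy : y ∈ A) (hxy : p x ≠ p y)
    (hk : ∀ z ∈ A, p x ≠ p z → c s(x, z) = k) : A.card ≤ levelBound ℓ := by
  classical
  have hcover : A ⊆ block A p x ∪ outerNbhd c A p k x := fun z hz ↦ by
    by_cases hxz : p x = p z
    · simp [hz, hxz]
    · simp [hz, hxz, hk z hz hxz]
  exact ((Finset.card_le_card hcover).trans (Finset.card_union_le _ _)).trans
    (hℓ.card_add_card_le_of_isCompleteBetween hA block_subset outerNbhd_subset
      (hp.isCompleteBetween hx k) ⟨x, mem_block_self hx⟩ ⟨y, by simp [hy, hxy, hk y hy hxy]⟩)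

theorem IsGallai.card_le_of_boundedBelow (hc : IsGallai c)
    (hℓ : BoundedBelow c ℓ) (hA : Avoids c A ℓ) : A.card ≤ levelBound ℓ := by
  by_cases hcard : A.card ≤ 1
  · exact hcard.trans (mixBound_pos _ _)
  obtain ⟨i, j, p, hp, a, ha, b, hb, hab⟩ := hc.exists_isGallaiPartition (not_le.1 hcard)
  have hmono : ∀ x ∈ A, ∀ k, (∀ z ∈ A, p x ≠ p z → c s(x, z) = k) → A.card ≤ levelBound ℓ := by
    intro x hx k hk
    obtain ⟨y, hy, hxy⟩ : ∃ y ∈ A, p x ≠ p y := by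
      by_cases hxa : p x = p a
      exacts [⟨b, hb, hxa ▸ hab⟩, ⟨a, ha, hxa⟩]
    exact hp.card_le_of_forall_color_eq hℓ hA hx hy hxy hk
  by_cases hij : i = j
  · exact hmono a ha i fun z hz haz ↦ by simpa [hij] using hp.color_mem ha hz haz
  by_cases hleft : ∀ x ∈ A, (outerNbhd c A p i x).Nonempty
  swap
  · push Not at hleft
    obtain ⟨x, hx, hempty⟩ := hleft
    refine hmono x hx j fun z hz hxz ↦ (hp.color_mem hx hz hxz).resolve_left fun hi ↦ ?_
    exact Finset.eq_empty_iff_forall_notMem.1 hempty z (mem_outerNbhd.2 ⟨hz, hxz, hi⟩)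
  by_cases hright : ∀ x ∈ A, (outerNbhd c A p j x).Nonempty
  swap
  · push Not at hright
    obtain ⟨x, hx, hempty⟩ := hright
    refine hmono x hx i fun z hz hxz ↦ (hp.color_mem hx hz hxz).resolve_right fun hj ↦ ?_
    exact Finset.eq_empty_iff_forall_notMem.1 hempty z (mem_outerNbhd.2 ⟨hz, hxz, hj⟩)
  exact IsReduced.card_le_levelBound ⟨hℓ, hA, hp, hij, hleft, hright⟩ ha

theorem IsGallai.card_le_levelBound (hc : IsGallai c) (hA : Avoids c A ℓ) :
    A.card ≤ levelBound ℓ := by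
  induction ℓ using WellFoundedLT.induction generalizing A with
  | ind ℓ ih => exact hc.card_le_of_boundedBelow (fun ℓ' hlt B hB ↦ ih ℓ' hlt hB) hA

end UpperBound

section LowerBound

open Function

variable {U V W K : Type*} {i j k : K}

theorem isGallai_const (i : K) : IsGallai fun _ : Sym2 V ↦ i :=
  fun _ _ _ _ _ _ ↦ .inl rfl

open scoped Classical in
/-- The colouring giving colour `i` to the edges of `G` and colour `j` to all other edges. -/
noncomputable def twoColoring (G : SimpleGraph V) (i j : K) (e : Sym2 V) : K :=
  if e ∈ G.edgeSet then i else j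

theorem isGallai_twoColoring (G : SimpleGraph V) (i j : K) : IsGallai (twoColoring G i j) :=
  fun x y z _ _ _ ↦ by
    simp only [twoColoring]
    split_ifs <;> simp

theorem colorClass_twoColoring_left (G : SimpleGraph V) (hij : i ≠ j) :
    colorClass (twoColoring G i j) i = G := by
  ext x y
  by_cases h : G.Adj x y <;> simp [twoColoring, h, hij.symm, G.ne_of_adj]

theorem colorClass_twoColoring_right (G : SimpleGraph V) (hij : i ≠ j) :
    colorClass (twoColoring G i j) j = Gᶜ := by
  ext x y
  by_cases h : G.Adj x y <;> simp [twoColoring, h, hij, compl_adj]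

theorem colorClass_twoColoring_of_ne (G : SimpleGraph V) (hi : k ≠ i) (hj : k ≠ j) :
    colorClass (twoColoring G i j) k = ⊥ := by
  ext x y
  by_cases h : G.Adj x y <;> simp [twoColoring, h, hi.symm, hj.symm]

theorem colorClass_const_of_ne (hk : k ≠ i) : colorClass (fun _ : Sym2 V ↦ i) k = ⊥ := by
  ext x y
  simp [hk.symm]

open scoped Classical in
/-- The lexicographic product of two colourings: every vertex of the outer colouring `d` is replaced
by a copy of the inner colouring `c`. -/
noncomputable def lexColoring (d : Sym2 U → K) (c : Sym2 V → K) : Sym2 (U × V) → K :=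
  Sym2.lift ⟨fun x y ↦ if x.1 = y.1 then c s(x.2, y.2) else d s(x.1, y.1), fun x y ↦ by
    simp only [eq_comm, Sym2.eq_swap]⟩

variable {d : Sym2 U → K} {c : Sym2 V → K} {x y z : U × V}

theorem lexColoring_of_eq (h : x.1 = y.1) : lexColoring d c s(x, y) = c s(x.2, y.2) := by
  simp [lexColoring, h]

theorem lexColoring_of_ne (h : x.1 ≠ y.1) : lexColoring d c s(x, y) = d s(x.1, y.1) := by
  simp [lexColoring, h]

theorem IsGallai.lexColoring (hd : IsGallai d) (hc : IsGallai c) : IsGallai (lexColoring d c) := by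
  intro x y z hxy hxz hyz
  have hsnd {x y : U × V} (hne : x ≠ y) (h : x.1 = y.1) : x.2 ≠ y.2 := fun h' ↦ hne (Prod.ext h h')
  by_cases h₁ : x.1 = y.1 <;> by_cases h₂ : x.1 = z.1
  · have h₃ : y.1 = z.1 := h₁.symm.trans h₂
    simpa only [lexColoring_of_eq, h₁, h₂, h₃] using
      hc (hsnd hxy h₁) (hsnd hxz h₂) (hsnd hyz h₃)
  · have h₃ : y.1 ≠ z.1 := h₁ ▸ h₂
    exact .inr (.inr (by rw [lexColoring_of_ne h₂, lexColoring_of_ne h₃, h₁]))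
  · have h₃ : y.1 ≠ z.1 := fun h ↦ h₁ (h₂.trans h.symm)
    exact .inr (.inl (by
      rw [lexColoring_of_ne h₁, lexColoring_of_ne h₃, h₂, Sym2.eq_swap]))
  · by_cases h₃ : y.1 = z.1
    · exact .inl (by rw [lexColoring_of_ne h₁, lexColoring_of_ne h₂, h₃])
    · rw [lexColoring_of_ne h₁, lexColoring_of_ne h₂, lexColoring_of_ne h₃]
      exact hd h₁ h₂ h₃

theorem free_lexColoring_of_outer_eq_bot {F : SimpleGraph W} (hF : F.Preconnected)
    (hd : colorClass d k = ⊥) (hc : F.Free (colorClass c k)) :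
    F.Free (colorClass (lexColoring d c) k) := by
  rintro ⟨f⟩
  have hstep {a b : W} (hab : F.Adj a b) : (f a).1 = (f b).1 := by
    by_contra hne
    have hadj := colorClass_adj.1 (f.toHom.map_adj hab)
    have : (colorClass d k).Adj (f a).1 (f b).1 :=
      colorClass_adj.2 ⟨(lexColoring_of_ne hne).symm.trans hadj.1, hne⟩
    simp [hd] at this
  have hconst (a b : W) : (f a).1 = (f b).1 :=
    mem_of_reachable (S := {b | (f a).1 = (f b).1}) (fun _ _ h hadj ↦ h.trans (hstep hadj))
      (hF a b) rfl
  have hinj : Injective fun a ↦ (f a).2 := fun a b hab ↦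
    f.injective (Prod.ext (hconst a b) hab)
  refine hc ⟨⟨⟨fun a ↦ (f a).2, fun {a b} hab ↦ ?_⟩, hinj⟩⟩
  have hadj := colorClass_adj.1 (f.toHom.map_adj hab)
  exact colorClass_adj.2 ⟨(lexColoring_of_eq (hconst a b)).symm.trans hadj.1, hinj.ne hab.ne⟩

theorem cliqueFree_lexColoring_of_outer_eq_bot {n : ℕ} (hd : colorClass d k = ⊥)
    (hc : (colorClass c k).CliqueFree n) : (colorClass (lexColoring d c) k).CliqueFree n := by
  rw [← Fintype.card_fin n, cliqueFree_iff_top_free] at hc ⊢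
  exact free_lexColoring_of_outer_eq_bot preconnected_top hd hc

theorem cliqueFree_lexColoring_of_inner_eq_bot {n : ℕ} (hc : colorClass c k = ⊥)
    (hd : (colorClass d k).CliqueFree n) : (colorClass (lexColoring d c) k).CliqueFree n := by
  have hfst {x y : U × V} (hxy : (colorClass (lexColoring d c) k).Adj x y) :
      (colorClass d k).Adj x.1 y.1 := by
    obtain ⟨hk, hne⟩ := colorClass_adj.1 hxy
    by_cases h : x.1 = y.1
    · have : (colorClass c k).Adj x.2 y.2 :=
        colorClass_adj.2 ⟨(lexColoring_of_eq h).symm.trans hk, fun h' ↦ hne (Prod.ext h h')⟩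
      simp [hc] at this
    · exact colorClass_adj.2 ⟨(lexColoring_of_ne h).symm.trans hk, h⟩
  rw [cliqueFree_iff] at hd ⊢
  refine ⟨fun f ↦ ?_⟩
  let g : completeGraph (Fin n) →g colorClass d k :=
    ⟨fun a ↦ (f a).1, fun h ↦ hfst (f.toHom.map_adj h)⟩
  exact hd.false ⟨g, g.injective_of_top_hom⟩

theorem preconnected_GH1 : GH1.Preconnected := by
  have h (a : Fin 5) : GH1.Reachable a 3 := by
    obtain rfl | ha := eq_or_ne a 3
    · exact .refl 3
    · exact Adj.reachable (by simp only [GH1, fromRel_adj]; grind)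
  exact fun a b ↦ (h a).trans (h b).symm

theorem free_GH1_of_cliqueFree_four {G : SimpleGraph V} (h : G.CliqueFree 4) : GH1.Free G := by
  rw [← Fintype.card_fin 4, cliqueFree_iff_top_free] at h
  refine fun hG ↦ h (IsContained.trans ⟨⟨⟨Fin.castSucc, fun {a b} hab ↦ ?_⟩,
    Fin.castSucc_injective 4⟩⟩ hG)
  revert a b
  simp only [GH1, fromRel_adj, top_adj]
  decide

/-- The counterpart of `AvoidsOn` for the lower bound, where level `2` stands for the smaller
graph `H₁`. -/
def FreeAtLevel (G : SimpleGraph V) : Fin 3 → Prop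
  | 0 => G.CliqueFree 2
  | 1 => G.CliqueFree 3
  | 2 => GH1.Free G

theorem freeAtLevel_of_cliqueFree {G : SimpleGraph V} (s : Fin 3) (h : G.CliqueFree (s + 2)) :
    FreeAtLevel G s :=
  match s, h with
  | 0, h | 1, h => h
  | 2, h => free_GH1_of_cliqueFree_four h

theorem FreeAtLevel.of_isContained {G : SimpleGraph V} {G' : SimpleGraph W} {s : Fin 3}
    (h : FreeAtLevel G s) (hG : G' ⊑ G) : FreeAtLevel G' s :=
  match s, h with
  | 0, h | 1, h => CliqueFree.comap hG h
  | 2, h => fun h' ↦ h (h'.trans hG)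

theorem FreeAtLevel.lexColoring_of_outer_eq_bot {s : Fin 3} (hd : colorClass d k = ⊥)
    (hc : FreeAtLevel (colorClass c k) s) : FreeAtLevel (colorClass (lexColoring d c) k) s :=
  match s, hc with
  | 0, hc | 1, hc => cliqueFree_lexColoring_of_outer_eq_bot hd hc
  | 2, hc => free_lexColoring_of_outer_eq_bot preconnected_GH1 hd hc

/-- There is a Gallai colouring on `N` vertices all of whose colour classes satisfy the
restriction that `ℓ` assigns to their colour. -/
def Attains (ℓ : K → Fin 3) (N : ℕ) : Prop :=
  ∃ (V : Type) (_ : Fintype V) (c : Sym2 V → K), IsGallai c ∧ Fintype.card V = N ∧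
    ∀ k, FreeAtLevel (colorClass c k) (ℓ k)

theorem Attains.lex {U : Type} [Fintype U] {d : Sym2 U → K} {ℓ ℓ' : K → Fin 3} {N : ℕ}
    (h : Attains ℓ' N) (hd : IsGallai d)
    (hℓ : ∀ k, ℓ' k = ℓ k ∧ colorClass d k = ⊥ ∨
      ℓ' k = 0 ∧ (colorClass d k).CliqueFree (ℓ k + 2)) :
    Attains ℓ (Fintype.card U * N) := by
  obtain ⟨V, _, c, hc, rfl, hfree⟩ := h
  refine ⟨U × V, inferInstance, lexColoring d c, hd.lexColoring hc, Fintype.card_prod U V,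
    fun k ↦ ?_⟩
  have hk := hfree k
  obtain ⟨hℓk, hdk⟩ | ⟨hℓk, hdk⟩ := hℓ k <;> rw [hℓk] at hk
  · exact hk.lexColoring_of_outer_eq_bot hdk
  · exact freeAtLevel_of_cliqueFree _
      (cliqueFree_lexColoring_of_inner_eq_bot (cliqueFree_two.1 hk) hdk)

variable [DecidableEq K] {ℓ : K → Fin 3} {N : ℕ}

theorem Attains.lex_twoColoring {U : Type} [Fintype U] {G : SimpleGraph U} {s : Fin 3}
    (hG : G.CliqueFree (s + 2)) (hG' : Gᶜ.CliqueFree (s + 2)) (hij : i ≠ j) (hi : ℓ i = s)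
    (hj : ℓ j = s) (h : Attains (update (update ℓ i 0) j 0) N) :
    Attains ℓ (Fintype.card U * N) := by
  refine h.lex (isGallai_twoColoring G i j) fun k ↦ ?_
  obtain rfl | hkj := eq_or_ne k j
  · exact .inr ⟨by simp, by rwa [colorClass_twoColoring_right G hij, hj]⟩
  obtain rfl | hki := eq_or_ne k i
  · exact .inr ⟨by simp [hkj], by rwa [colorClass_twoColoring_left G hij, hi]⟩
  exact .inl ⟨by simp [hkj, hki], colorClass_twoColoring_of_ne G hki hkj⟩

theorem Attains.lex_edge (hi : ℓ i = 1) (h : Attains (update ℓ i 0) N) : Attains ℓ (2 * N) := by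
  refine h.lex (U := Fin 2) (isGallai_const i) fun k ↦ ?_
  obtain rfl | hk := eq_or_ne k i
  · exact .inr ⟨update_self .., cliqueFree_of_card_lt (by simp [hi])⟩
  · exact .inl ⟨update_of_ne hk .., colorClass_const_of_ne hk⟩

omit [DecidableEq K] in
theorem attains_one [Nonempty K] (ℓ : K → Fin 3) : Attains ℓ 1 := by
  inhabit K
  exact ⟨Unit, inferInstance, fun _ ↦ default, fun _ _ _ h ↦ absurd rfl h, rfl,
    fun k ↦ freeAtLevel_of_cliqueFree _ (cliqueFree_of_card_lt (by simp))⟩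

omit [DecidableEq K] in
theorem attains_four (hi : ℓ i = 2) : Attains ℓ 4 := by
  refine ⟨Fin 4, inferInstance, fun _ ↦ i, isGallai_const i, rfl, fun k ↦ ?_⟩
  obtain rfl | hk := eq_or_ne k i
  · rw [hi]
    exact fun ⟨f⟩ ↦ by simpa using Fintype.card_le_of_injective f f.injective
  · rw [colorClass_const_of_ne hk]
    exact freeAtLevel_of_cliqueFree _ (cliqueFree_bot (by omega))

/-- The Paley graph of `F`: two elements are joined if their difference is a square. -/
def paley (F : Type*) [Ring F] : SimpleGraph F :=
  circulantGraph {a | IsSquare a}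

instance (F : Type*) [Ring F] [Fintype F] [DecidableEq F] : DecidableRel (paley F).Adj :=
  inferInstanceAs (DecidableRel (circulantGraph {a : F | IsSquare a}).Adj)

theorem paley_adj_sub {F : Type*} [Ring F] {x y z : F} (h : (paley F).Adj x y) :
    (paley F).Adj (x - z) (y - z) := by
  simpa only [paley, sub_eq_add_neg, circulantGraph_adj_translate] using h

/-- If `-1` is a square and multiplication by the unit `u` exchanges squares and non-squares, it is
an isomorphism of the Paley graph with its complement. -/
def paleyIsoCompl {F : Type*} [CommRing F] (u : Fˣ) (hneg : IsSquare (-1 : F))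
    (hu : ∀ a : F, a ≠ 0 → (IsSquare (u * a) ↔ ¬ IsSquare a)) : (paley F)ᶜ ≃g paley F where
  toEquiv := u.mulLeft
  map_rel_iff' {x y} := by
    have hcomm (a b : F) : IsSquare (a - b) ↔ IsSquare (b - a) := by
      constructor <;> intro h <;> simpa using hneg.mul h
    obtain rfl | hxy := eq_or_ne x y
    · simp
    have hxy' := hu (x - y) (sub_ne_zero.2 hxy)
    have hyx' := hu (y - x) (sub_ne_zero.2 hxy.symm)
    have hcomm' := hcomm x y
    simp only [paley, compl_adj, circulantGraph_adj, Units.mulLeft_apply, ne_eq,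
      Units.mul_right_inj, Set.mem_ofPred_eq, ← mul_sub]
    tauto

theorem cliqueFree_paley_five : (paley (ZMod 5)).CliqueFree 3 := by
  refine cliqueFree_iff.2 ⟨fun f ↦ ?_⟩
  have hadj (a b : Fin 3) (hab : a ≠ b := by decide) :
      (paley (ZMod 5)).Adj (f a - f 0) (f b - f 0) :=
    paley_adj_sub (f.toHom.map_adj hab)
  have hadj0 (a : Fin 3) (ha : 0 ≠ a := by decide) := sub_self (f 0) ▸ hadj 0 a ha
  have h : ∀ a b : ZMod 5, (paley (ZMod 5)).Adj 0 a → (paley (ZMod 5)).Adj 0 b →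
      ¬ (paley (ZMod 5)).Adj a b := by decide
  exact h _ _ (hadj0 1) (hadj0 2) (hadj 1 2)

theorem cliqueFree_paley_seventeen : (paley (ZMod 17)).CliqueFree 4 := by
  refine cliqueFree_iff.2 ⟨fun f ↦ ?_⟩
  have hadj (a b : Fin 4) (hab : a ≠ b := by decide) :
      (paley (ZMod 17)).Adj (f a - f 0) (f b - f 0) :=
    paley_adj_sub (f.toHom.map_adj hab)
  have hadj0 (a : Fin 4) (ha : 0 ≠ a := by decide) := sub_self (f 0) ▸ hadj 0 a ha
  have h : ∀ a b : ZMod 17, (paley (ZMod 17)).Adj 0 a → (paley (ZMod 17)).Adj 0 b →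
      (paley (ZMod 17)).Adj a b → ∀ d, (paley (ZMod 17)).Adj 0 d → (paley (ZMod 17)).Adj a d →
        ¬ (paley (ZMod 17)).Adj b d := by decide +kernel
  exact h _ _ (hadj0 1) (hadj0 2) (hadj 1 2) _ (hadj0 3) (hadj 1 3) (hadj 2 3)

theorem cliqueFree_compl_paley_five : (paley (ZMod 5))ᶜ.CliqueFree 3 :=
  cliqueFree_paley_five.comap
    (paleyIsoCompl (ZMod.unitOfCoprime 2 (by norm_num)) (by decide) (by decide)).isContained

theorem cliqueFree_compl_paley_seventeen : (paley (ZMod 17))ᶜ.CliqueFree 4 :=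
  cliqueFree_paley_seventeen.comap
    (paleyIsoCompl (ZMod.unitOfCoprime 3 (by norm_num)) (by decide) (by decide)).isContained

open Finset

variable [Fintype K]

theorem levelBound_eq_five_mul (hij : i ≠ j) (hi : ℓ i = 1) (hj : ℓ j = 1) :
    levelBound ℓ = 5 * pairBound ℓ i j 0 0 := by
  obtain ⟨m, r, h⟩ := exists_pairBound_eq ℓ hij
  simpa [← pairBound_of_eq hi hj, h] using mixBound_add_two_left m r

theorem levelBound_eq_seventeen_mul (hij : i ≠ j) (hi : ℓ i = 2) (hj : ℓ j = 2) :
    levelBound ℓ = 17 * pairBound ℓ i j 0 0 := by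
  obtain ⟨m, r, h⟩ := exists_pairBound_eq ℓ hij
  simpa [← pairBound_of_eq hi hj, h] using mixBound_add_two_right m r

theorem levelBound_eq_two_mul (h : ∀ k, ℓ k = 1 ↔ k = i) :
    levelBound ℓ = 2 * levelBound (update ℓ i 0) := by
  have hi : ℓ i = 1 := (h i).2 rfl
  have hone : #{k | update ℓ i 0 k = 1} = 0 := by
    simp only [card_eq_zero, filter_eq_empty_iff, update_apply]
    grind
  have htwo : #{k | update ℓ i 0 k = 2} = #{k | ℓ k = 2} := by
    congr 1
    ext k
    by_cases hk : k = i <;> simp [update_apply, hk, hi]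
  simp [levelBound, hone, htwo, h, mixBound, filter_eq']

omit [DecidableEq K] in
theorem levelBound_eq_four (h1 : ∀ k, ℓ k ≠ 1) (h2 : ∀ k, ℓ k = 2 ↔ k = i) :
    levelBound ℓ = 4 := by
  have htwo : #{k | ℓ k = 2} = 1 := card_eq_one.2 ⟨i, by ext; simp [h2]⟩
  simp [levelBound, h1, htwo, mixBound]

omit [DecidableEq K] in
theorem levelBound_eq_one (h1 : ∀ k, ℓ k ≠ 1) (h2 : ∀ k, ℓ k ≠ 2) : levelBound ℓ = 1 := by
  simp [levelBound, h1, h2, mixBound]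

omit [DecidableEq K] in
theorem attains_levelBound [Nonempty K] (ℓ : K → Fin 3) : Attains ℓ (levelBound ℓ) := by
  classical
  induction ℓ using WellFoundedLT.induction with
  | ind ℓ ih =>
  have hlt {i : K} (hi : ℓ i ≠ 0) : update ℓ i 0 < ℓ :=
    update_lt_self_iff.2 (Fin.pos_of_ne_zero hi)
  have ih' {i : K} (j : K) (hi : ℓ i ≠ 0) :
      Attains (update (update ℓ i 0) j 0) (pairBound ℓ i j 0 0) :=
    ih _ (lt_of_le_of_lt (update_le_self_iff.2 (Fin.zero_le _)) (hlt hi))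
  by_cases h22 : ∃ i j, i ≠ j ∧ ℓ i = 2 ∧ ℓ j = 2
  · obtain ⟨i, j, hij, hi, hj⟩ := h22
    rw [levelBound_eq_seventeen_mul hij hi hj]
    exact (ih' j (by simp [hi])).lex_twoColoring cliqueFree_paley_seventeen
      cliqueFree_compl_paley_seventeen hij hi hj
  by_cases h11 : ∃ i j, i ≠ j ∧ ℓ i = 1 ∧ ℓ j = 1
  · obtain ⟨i, j, hij, hi, hj⟩ := h11
    rw [levelBound_eq_five_mul hij hi hj]
    exact (ih' j (by simp [hi])).lex_twoColoring cliqueFree_paley_five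
      cliqueFree_compl_paley_five hij hi hj
  by_cases h1 : ∃ i, ℓ i = 1
  · obtain ⟨i, hi⟩ := h1
    rw [levelBound_eq_two_mul (i := i) (by grind)]
    exact (ih _ (hlt (by simp [hi]))).lex_edge hi
  push Not at h1
  by_cases h2 : ∃ i, ℓ i = 2
  · obtain ⟨i, hi⟩ := h2
    rw [levelBound_eq_four (i := i) h1 (by grind)]
    exact attains_four hi
  push Not at h2
  rw [levelBound_eq_one h1 h2]
  exact attains_one ℓ

end LowerBound

section ForbiddenGraphs

variable {V : Type*} {G : SimpleGraph V}

theorem GH1_isContained_GH2 : GH1 ⊑ GH2 := by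
  let f : Fin 5 → Fin 5 := ![0, 2, 4, 3, 1]
  have hadj : ∀ a b, GH1.Adj a b → GH2.Adj (f a) (f b) := by
    simp only [GH1, GH2, fromRel_adj, sdiff_adj, top_adj]
    decide
  exact ⟨⟨⟨f, @hadj⟩, (by decide : f.Injective)⟩⟩

theorem h2FreeOn_of_free_GH2 {A : Set V} (h : GH2.Free G) : H2FreeOn G A := by
  classical
  rintro Q - hQ w - hw x ⟨hx, (hwx : G.Adj w x)⟩ y ⟨hy, (hwy : G.Adj w y)⟩
  by_contra hxy
  obtain ⟨z, u, hzu, hQzu⟩ : ∃ z u, z ≠ u ∧ (Q.erase x).erase y = {z, u} := by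
    rw [← Finset.card_eq_two, Finset.card_erase_of_mem (by simpa using ⟨Ne.symm hxy, hy⟩),
      Finset.card_erase_of_mem hx, hQ.card_eq]
  have hz : z ∈ (Q.erase x).erase y := by simp [hQzu]
  have hu : u ∈ (Q.erase x).erase y := by simp [hQzu]
  simp only [Finset.mem_erase, ne_eq] at hz hu
  have hclique : ∀ {a b}, a ∈ Q → b ∈ Q → a ≠ b → G.Adj a b := fun ha hb ↦ hQ.isClique ha hb
  let f : Fin 5 → V := ![z, w, u, x, y]
  have hinj : f.Injective := by
    intro a b
    fin_cases a <;> fin_cases b <;> simp [f] <;> grind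
  have hadj : ∀ a b, GH2.Adj a b → G.Adj (f a) (f b) := by
    intro a b
    fin_cases a <;> fin_cases b <;> simp [f, GH2] <;> grind [adj_comm]
  exact h ⟨⟨⟨f, @hadj⟩, hinj⟩⟩

end ForbiddenGraphs

section MixedNumbers

variable {n k r : ℕ} {c : Fin n → Fin n → Fin k} {i : Fin k}

theorem hasMonoCopy_iff_isContained {W : Type} {F : SimpleGraph W} (hs : ∀ u v, c u v = c v u) :
    HasMonoCopy F c i ↔ F ⊑ colorClass (Sym2.lift ⟨c, hs⟩) i := by
  constructor
  · rintro ⟨f, hf, hc⟩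
    exact ⟨⟨⟨f, fun {a b} hab ↦ colorClass_adj.2 ⟨hc a b hab, hf.ne hab.ne⟩⟩, hf⟩⟩
  · rintro ⟨f⟩
    exact ⟨f, f.injective, fun a b hab ↦ (colorClass_adj.1 (f.toHom.map_adj hab)).1⟩

theorem isGallai_of_isGallaiColoring (hc : IsGallaiColoring c) :
    IsGallai (Sym2.lift ⟨c, hc.1⟩) := by
  intro x y z hxy hxz hyz
  by_contra! h
  exact hc.2 ⟨x, y, z, hxy, hxz, hyz, h⟩

theorem mixBound_of_even_of_odd {m r : ℕ} (hm : Even m) (hr : Odd r) :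
    mixBound m r = 4 * 5 ^ (m / 2) * 17 ^ ((r - 1) / 2) := by
  obtain ⟨m, rfl⟩ := hm.exists_two_nsmul
  obtain ⟨r, rfl⟩ := hr
  have hr : (2 * r + 1) / 2 = r := by omega
  simp [mixBound, Nat.add_mod, hr]
  ring

/-- The levels of the colours in `mixKH k r H`, for `H` one of `H₁` and `H₂`. -/
def mixLevel (k r : ℕ) (i : Fin k) : Fin 3 :=
  if (i : ℕ) < r then 2 else 1

theorem levelBound_mixLevel (hr : r ≤ k) : levelBound (mixLevel k r) = mixBound (k - r) r := by
  have htwo : Finset.card {i : Fin k | mixLevel k r i = 2} = r := by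
    simp [mixLevel, Fin.card_filter_val_lt, hr]
  have hone : Finset.card {i : Fin k | mixLevel k r i = 1} = k - r := by
    have h := Finset.card_filter_add_card_filter_not (s := Finset.univ) (mixLevel k r · = 2)
    have hiff (i : Fin k) : mixLevel k r i = 1 ↔ ¬ mixLevel k r i = 2 := by
      unfold mixLevel; split_ifs <;> decide
    rw [htwo, Finset.card_univ, Fintype.card_fin] at h
    simp only [hiff]
    omega
  rw [levelBound, hone, htwo]

theorem mixKH_of_lt {H : SimpleGraph (Fin 5)} (hi : (i : ℕ) < r) :
    mixKH k r H i = ⟨Fin 5, H⟩ :=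
  if_pos hi

theorem mixKH_of_not_lt {H : SimpleGraph (Fin 5)} (hi : ¬ (i : ℕ) < r) :
    mixKH k r H i = ⟨Fin 3, GK3⟩ :=
  if_neg hi

theorem avoidsOn_of_not_hasMonoCopy {H : SimpleGraph (Fin 5)} (hH : H ⊑ GH2)
    (hs : ∀ u v, c u v = c v u) {A : Set (Fin n)} (h : ¬ HasMonoCopy (mixKH k r H i).2 c i) :
    AvoidsOn (colorClass (Sym2.lift ⟨c, hs⟩) i) A (mixLevel k r i) := by
  rw [hasMonoCopy_iff_isContained hs] at h
  by_cases hi : (i : ℕ) < r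
  · rw [mixKH_of_lt hi] at h
    rw [mixLevel, if_pos hi]
    exact h2FreeOn_of_free_GH2 (mt hH.trans h)
  · rw [mixKH_of_not_lt hi] at h
    rw [mixLevel, if_neg hi]
    exact ((cliqueFree_iff_top_free (β := Fin 3)).2 h).cliqueFreeOn

theorem not_hasMonoCopy_of_freeAtLevel {H : SimpleGraph (Fin 5)} (hH : GH1 ⊑ H)
    (hs : ∀ u v, c u v = c v u)
    (h : FreeAtLevel (colorClass (Sym2.lift ⟨c, hs⟩) i) (mixLevel k r i)) :
    ¬ HasMonoCopy (mixKH k r H i).2 c i := by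
  rw [hasMonoCopy_iff_isContained hs]
  by_cases hi : (i : ℕ) < r
  · rw [mixLevel, if_pos hi] at h
    rw [mixKH_of_lt hi]
    exact mt hH.trans h
  · rw [mixLevel, if_neg hi] at h
    rw [mixKH_of_not_lt hi]
    exact (cliqueFree_iff_top_free (β := Fin 3)).1 h

theorem exists_hasMonoCopy {H : SimpleGraph (Fin 5)} (hH : H ⊑ GH2) (hr : r ≤ k)
    (hn : mixBound (k - r) r < n) (hc : IsGallaiColoring c) :
    ∃ i, HasMonoCopy (mixKH k r H i).2 c i := by
  by_contra! h
  refine hn.not_ge ?_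
  rw [← levelBound_mixLevel hr, ← Fintype.card_fin n]
  exact (isGallai_of_isGallaiColoring hc).card_le_levelBound (A := Finset.univ) fun i ↦
    avoidsOn_of_not_hasMonoCopy hH hc.1 (h i)

theorem exists_isGallaiColoring {H : SimpleGraph (Fin 5)} (hH : GH1 ⊑ H) (hk : 1 ≤ k) (hr : r ≤ k)
    (hn : n ≤ mixBound (k - r) r) : ∃ c : Fin n → Fin n → Fin k, IsGallaiColoring c ∧
      ∀ i, ¬ HasMonoCopy (mixKH k r H i).2 c i := by
  have : NeZero k := ⟨by omega⟩
  obtain ⟨V, _, c, hc, hcard, hfree⟩ := attains_levelBound (mixLevel k r)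
  obtain ⟨f⟩ : Nonempty (Fin n ↪ V) := Function.Embedding.nonempty_of_card_le (by
    rwa [Fintype.card_fin, hcard, levelBound_mixLevel hr])
  have hs (u v : Fin n) : c s(f u, f v) = c s(f v, f u) := by rw [Sym2.eq_swap]
  refine ⟨fun u v ↦ c s(f u, f v), ⟨hs, ?_⟩, fun i ↦ not_hasMonoCopy_of_freeAtLevel hH hs ?_⟩
  · rintro ⟨u, v, w, huv, huw, hvw, h⟩
    have := hc (f.injective.ne huv) (f.injective.ne huw) (f.injective.ne hvw)
    tauto
  · exact (hfree i).of_isContained ⟨⟨⟨f, fun h ↦ by simpa using h⟩, f.injective⟩⟩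

end MixedNumbers

end GallaiRamsey

open GallaiRamsey in
theorem GR_mixKH_even_odd_general (H : SimpleGraph (Fin 5)) (hH₁ : GH1 ⊑ H) (hH₂ : H ⊑ GH2)
    (k r : ℕ) (hk : 1 ≤ k) (hr : r ≤ k) :
    GR k (mixKH k r H) = mixBound (k - r) r + 1 := by
  refine IsLeast.csInf_eq ⟨fun c ↦ exists_hasMonoCopy hH₂ hr (Nat.lt_succ_self _), fun n hn ↦ ?_⟩
  by_contra! hlt
  obtain ⟨c, hc, hfree⟩ := exists_isGallaiColoring hH₁ hk hr (Nat.le_of_lt_succ hlt)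
  exact (hn c hc).elim hfree

/-- Theorem 1.4, case (a₄): for H ∈ {H₁, H₂}, k ≥ 1, 0 ≤ r ≤ k with k - r even and r
odd, GR_k((k-r)K₃, rH) = 4·5^((k-r)/2)·17^((r-1)/2) + 1. -/
theorem GR_mixKH_even_odd (H : SimpleGraph (Fin 5)) (hH : H = GH1 ∨ H = GH2)
    (k r : ℕ) (hk : 1 ≤ k) (hr : r ≤ k) (h1 : Even (k - r)) (h2 : Odd r) :
    GR k (mixKH k r H) = 4 * 5 ^ ((k - r) / 2) * 17 ^ ((r - 1) / 2) + 1 := by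
  rw [← GallaiRamsey.mixBound_of_even_of_odd h1 h2]
  rcases hH with rfl | rfl
  · exact GR_mixKH_even_odd_general GH1 .rfl GallaiRamsey.GH1_isContained_GH2 k r hk hr
  · exact GR_mixKH_even_odd_general GH2 GallaiRamsey.GH1_isContained_GH2 .rfl k r hk hr
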